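/- For every integer n ≥ 40, |Ẽ(n+1) + Ẽ(n-1) - 2·Ẽ(n)| < (5/(n-1)) · e^{-π·√(24n-25)/18}, where Ẽ(m) = (1/m)·log(p(m)/T̃(m)). -/

import Mathlib

open Real

/-- The partition function, as a real number. -/
noncomputable def p (n : ℕ) : ℝ := (Fintype.card (Nat.Partition n) : ℝ)

/-- `μ(x) = (π/6)·√(24x - 1)`. -/
noncomputable def mu (x : ℝ) : ℝ := π / 6 * Real.sqrt (24 * x - 1)

/-- `d = π²/(6√3)`. -/
noncomputable def d : ℝ := π ^ 2 / (6 * Real.sqrt 3)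

/-- The main term `T̃(x) = (d/μ(x)²)·(1 - 1/μ(x))·e^{μ(x)}`. -/
noncomputable def T (x : ℝ) : ℝ := d / mu x ^ 2 * (1 - 1 / mu x) * Real.exp (mu x)

/-- The error term `Ẽ(n) = (1/n)·log(p(n)/T̃(n))`. -/
noncomputable def E (n : ℕ) : ℝ := 1 / (n : ℝ) * Real.log (p n / T (n : ℝ))

/-- The number of partitions of `n` all of whose parts are at most `N`. -/
def partsLE (N n : ℕ) : ℕ := (Nat.Partition.restricted n (· ≤ N)).card

lemma partsLE_zero (n : ℕ) : partsLE 0 n = if n = 0 then 1 else 0 := by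
  unfold partsLE Nat.Partition.restricted
  split_ifs with h
  · subst h
    simp
  · rw [Finset.card_eq_zero, Finset.filter_eq_empty_iff]
    intro x _ hx
    have h0 : x.parts = 0 := by
      rw [Multiset.eq_zero_iff_forall_notMem]
      intro a ha
      have := x.parts_pos ha
      have := hx a ha
      omega
    apply h
    rw [← x.parts_sum, h0, Multiset.sum_zero]

lemma partsLE_of_le {N n : ℕ} (h : n ≤ N) : partsLE N n = Fintype.card n.Partition := by
  unfold partsLE Nat.Partition.restricted
  rw [Finset.filter_true_of_mem, Finset.card_univ]
  intro x _ i hi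
  exact (Nat.Partition.le_of_mem_parts hi).trans h

lemma partsLE_le (N n : ℕ) : partsLE N n ≤ Fintype.card n.Partition :=
  Finset.card_le_univ _

lemma partsLE_succ_of_lt {N n : ℕ} (h : n < N + 1) : partsLE (N + 1) n = partsLE N n := by
  rw [partsLE_of_le h.le, partsLE_of_le (by omega)]

lemma partsLE_succ_of_le {N n : ℕ} (h : N + 1 ≤ n) :
    partsLE (N + 1) n = partsLE N n + partsLE (N + 1) (n - (N + 1)) := by
  unfold partsLE Nat.Partition.restricted
  rw [← Finset.card_filter_add_card_filter_not (s := Finset.univ.filter _)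
    (fun x : n.Partition => N + 1 ∈ x.parts), add_comm]
  congr 1
  · congr 1
    ext x
    simp only [Finset.mem_filter, Finset.mem_univ, true_and]
    constructor
    · rintro ⟨h1, h2⟩ i hi
      have : i ≠ N + 1 := fun h => h2 (h ▸ hi)
      have := h1 i hi
      omega
    · intro h1
      exact ⟨fun i hi => (h1 i hi).trans (by omega), fun h => by have := h1 _ h; omega⟩
  · refine Finset.card_bij'
      (fun x hx => Nat.Partition.partitionWithPartEquiv (Nat.succ_pos N) h
        ⟨x, (Finset.mem_filter.1 hx).2⟩)
      (fun y _ => ((Nat.Partition.partitionWithPartEquiv (Nat.succ_pos N) h).symm y).1)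
      ?_ ?_ ?_ ?_
    · intro x hx
      simp only [Finset.mem_filter, Finset.mem_univ, true_and] at hx ⊢
      intro i hi
      rw [Nat.Partition.partitionWithPartEquiv_apply_parts] at hi
      exact hx.1 i (Multiset.mem_of_mem_erase hi)
    · intro y hy
      simp only [Finset.mem_filter, Finset.mem_univ, true_and,
        Nat.Partition.partitionWithPartEquiv_symm_apply_parts, Multiset.mem_cons] at hy ⊢
      refine ⟨?_, by simp⟩
      rintro i (rfl | hi)
      · exact le_rfl
      · exact hy i hi
    · intro x hx
      simp
    · intro y hy
      simp

lemma sum_range_partsLE_succ {R : Type*} [CommSemiring R] (q : R) (N M : ℕ) :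
    ∑ n ∈ Finset.range M, (partsLE (N + 1) n : R) * q ^ n =
      ∑ n ∈ Finset.range M, (partsLE N n : R) * q ^ n +
        q ^ (N + 1) * ∑ n ∈ Finset.range (M - (N + 1)), (partsLE (N + 1) n : R) * q ^ n := by
  induction M with
  | zero => simp
  | succ M ih =>
    rw [Finset.sum_range_succ, Finset.sum_range_succ, ih]
    rcases Nat.lt_or_ge M (N + 1) with h | h
    · rw [partsLE_succ_of_lt h, show M + 1 - (N + 1) = 0 by omega,
        show M - (N + 1) = 0 by omega]
      simp
    · rw [show M + 1 - (N + 1) = (M - (N + 1)) + 1 by omega, Finset.sum_range_succ,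
        partsLE_succ_of_le h]
      have : q ^ M = q ^ (N + 1) * q ^ (M - (N + 1)) := by
        rw [← pow_add]; congr 1; omega
      rw [this]
      push_cast
      ring

lemma sum_range_partsLE_le {r : ℝ} (h0 : 0 ≤ r) (h1 : r < 1) (N M : ℕ) :
    ∑ n ∈ Finset.range M, (partsLE N n : ℝ) * r ^ n ≤
      (∏ k ∈ Finset.range N, (1 - r ^ (k + 1)))⁻¹ := by
  induction N with
  | zero =>
    simp only [partsLE_zero, Finset.range_zero, Finset.prod_empty, inv_one]
    rcases M with _ | M
    · simp
    · rw [Finset.sum_eq_single 0] <;> simp +contextual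
  | succ N ih =>
    have hpos : 0 < 1 - r ^ (N + 1) := sub_pos.2 (pow_lt_one₀ h0 h1 (Nat.succ_ne_zero N))
    have h := sum_range_partsLE_succ r N M
    have hle : ∑ n ∈ Finset.range (M - (N + 1)), (partsLE (N + 1) n : ℝ) * r ^ n ≤
        ∑ n ∈ Finset.range M, (partsLE (N + 1) n : ℝ) * r ^ n :=
      Finset.sum_le_sum_of_subset_of_nonneg
        (Finset.range_mono (Nat.sub_le _ _)) (fun _ _ _ => by positivity)
    rw [Finset.prod_range_succ, mul_inv, ← div_eq_mul_inv, le_div_iff₀ hpos]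
    have := mul_le_mul_of_nonneg_left hle (pow_nonneg h0 (N + 1))
    linarith

lemma p_sum_range_le {r : ℝ} (h0 : 0 ≤ r) (h1 : r < 1) (M : ℕ) :
    ∑ n ∈ Finset.range M, p n * r ^ n ≤ (∏ k ∈ Finset.range M, (1 - r ^ (k + 1)))⁻¹ := by
  refine le_trans (le_of_eq (Finset.sum_congr rfl fun n hn => ?_)) (sum_range_partsLE_le h0 h1 M M)
  rw [partsLE_of_le (Finset.mem_range.1 hn).le, p]

lemma p_nonneg (n : ℕ) : 0 ≤ p n := Nat.cast_nonneg _

lemma summable_p_mul_pow {r : ℝ} (h0 : 0 ≤ r) (h1 : r < 1) :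
    Summable fun n => p n * r ^ n := by
  have hm : Multipliable fun n : ℕ => 1 + -(r ^ (n + 1)) := by
    apply Real.multipliable_one_add_of_summable
    exact ((summable_nat_add_iff 1).mpr (summable_geometric_of_lt_one h0 h1)).neg
  have hne : ∏' n : ℕ, (1 + -(r ^ (n + 1))) ≠ 0 := by
    refine tprod_one_add_ne_zero_of_summable (fun n => ?_) ?_
    · have := pow_lt_one₀ h0 h1 (Nat.succ_ne_zero n)
      simp only [Nat.succ_eq_add_one] at this
      linarith
    · simpa using ((summable_nat_add_iff 1).mpr (summable_geometric_of_lt_one h0 h1)).abs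
  have ht := (hm.hasProd.tendsto_prod_nat).inv₀ hne
  obtain ⟨c, hc⟩ := ht.bddAbove_range
  refine summable_of_sum_range_le (c := c) (fun n => mul_nonneg (p_nonneg n) (pow_nonneg h0 n))
    fun M => (p_sum_range_le h0 h1 M).trans ?_
  simpa [sub_eq_add_neg] using hc (Set.mem_range_self M)

lemma hasSum_partsLE {q : ℂ} (hq : ‖q‖ < 1) (N : ℕ) :
    HasSum (fun n => (partsLE N n : ℂ) * q ^ n)
      (∏ k ∈ Finset.range N, (1 - q ^ (k + 1)))⁻¹ := by
  have hsum (N : ℕ) : Summable fun n => (partsLE N n : ℂ) * q ^ n := by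
    refine Summable.of_norm_bounded (summable_p_mul_pow (norm_nonneg q) hq) fun n => ?_
    rw [norm_mul, norm_pow, Complex.norm_natCast, p]
    exact mul_le_mul_of_nonneg_right (Nat.cast_le.2 (partsLE_le N n)) (by positivity)
  induction N with
  | zero =>
    have := hasSum_ite_eq (0 : ℕ) (1 : ℂ)
    simp only [Finset.range_zero, Finset.prod_empty, inv_one, partsLE_zero]
    convert this using 2 with n
    split_ifs with h <;> simp [h]
  | succ N ih =>
    have hne : 1 - q ^ (N + 1) ≠ 0 := by
      intro h
      have : ‖q ^ (N + 1)‖ = 1 := by rw [← sub_eq_zero.1 h, norm_one]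
      rw [norm_pow] at this
      exact (pow_lt_one₀ (norm_nonneg q) hq (Nat.succ_ne_zero N)).ne this
    have h1 := (hsum (N + 1)).hasSum.tendsto_sum_nat
    have h2 : Filter.Tendsto (fun M => M - (N + 1)) Filter.atTop Filter.atTop :=
      Filter.tendsto_sub_atTop_nat _
    have h3 := ih.tendsto_sum_nat.add ((h1.comp h2).const_mul (q ^ (N + 1)))
    have h4 := tendsto_nhds_unique h1 (h3.congr fun M => (sum_range_partsLE_succ q N M).symm)
    have h5 : ∑' n, (partsLE (N + 1) n : ℂ) * q ^ n =
        (∏ k ∈ Finset.range (N + 1), (1 - q ^ (k + 1)))⁻¹ := by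
      rw [Finset.prod_range_succ, mul_inv, ← div_eq_mul_inv, eq_div_iff hne]
      linear_combination h4
    exact h5 ▸ (hsum (N + 1)).hasSum

/-- Euler's generating function for the partition numbers. -/
theorem hasSum_p_mul_pow {q : ℂ} (hq : ‖q‖ < 1) :
    HasSum (fun n => (p n : ℂ) * q ^ n) (∏' k : ℕ, (1 - q ^ (k + 1)))⁻¹ := by
  have hm := ModularForm.multipliable_one_sub_pow hq
  have hne : ∏' n : ℕ, (1 - q ^ (n + 1)) ≠ 0 := by
    have := tprod_one_add_ne_zero_of_summable (f := fun n : ℕ => -(q ^ (n + 1))) (fun n => ?_) ?_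
    · simpa [sub_eq_add_neg] using this
    · intro h
      have h' : q ^ (n + 1) = 1 := by linear_combination -h
      have : ‖q ^ (n + 1)‖ = 1 := by rw [h', norm_one]
      rw [norm_pow] at this
      exact (pow_lt_one₀ (norm_nonneg q) hq (Nat.succ_ne_zero n)).ne this
    · simpa using (summable_nat_add_iff 1).mpr (summable_geometric_of_lt_one (norm_nonneg q) hq)
  have hs := summable_p_mul_pow (norm_nonneg q) hq
  have hS : Summable fun n => (p n : ℂ) * q ^ n := by
    refine Summable.of_norm_bounded hs fun n => ?_
    rw [norm_mul, norm_pow, Complex.norm_real, Real.norm_of_nonneg (p_nonneg n)]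
  have h1 : Filter.Tendsto (fun N => ∑' n, (partsLE N n : ℂ) * q ^ n) Filter.atTop
      (nhds (∑' n, (p n : ℂ) * q ^ n)) := by
    refine tendsto_tsum_of_dominated_convergence hs (fun n => ?_) (.of_forall fun N n => ?_)
    · refine tendsto_nhds_of_eventually_eq ?_
      filter_upwards [Filter.eventually_ge_atTop n] with N hN
      rw [partsLE_of_le hN, p, Complex.ofReal_natCast]
    · rw [norm_mul, norm_pow, Complex.norm_natCast, p]
      exact mul_le_mul_of_nonneg_right (Nat.cast_le.2 (partsLE_le N n)) (by positivity)
  have h2 := (hm.hasProd.tendsto_prod_nat).inv₀ hne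
  have h3 := tendsto_nhds_unique h1 (h2.congr fun N => (hasSum_partsLE hq N).tsum_eq.symm)
  exact h3 ▸ hS.hasSum

lemma tsum_p_mul_pow_le {r : ℝ} (h0 : 0 ≤ r) (h1 : r < 1 / 2) :
    ∑' n, p n * r ^ n ≤ 1 + r / (1 - 2 * r) := by
  refine (summable_p_mul_pow h0 (by linarith)).tsum_le_of_sum_range_le fun M => ?_
  refine (p_sum_range_le h0 (by linarith) M).trans ?_
  have hgeom : ∑ k ∈ Finset.range M, r ^ (k + 1) ≤ r / (1 - r) := by
    have h := (summable_geometric_of_lt_one h0 (by linarith : r < 1)).sum_le_tsum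
      (Finset.range M) (fun i _ => pow_nonneg h0 i)
    rw [tsum_geometric_of_lt_one h0 (by linarith)] at h
    calc ∑ k ∈ Finset.range M, r ^ (k + 1) = r * ∑ k ∈ Finset.range M, r ^ k := by
          rw [Finset.mul_sum]; exact Finset.sum_congr rfl fun k _ => pow_succ' r k
      _ ≤ r * (1 - r)⁻¹ := mul_le_mul_of_nonneg_left h h0
      _ = r / (1 - r) := by rw [div_eq_mul_inv]
  have hprod : 1 - r / (1 - r) ≤ ∏ k ∈ Finset.range M, (1 - r ^ (k + 1)) := by
    refine le_trans (b := 1 - ∑ k ∈ Finset.range M, r ^ (k + 1)) (by linarith) ?_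
    clear hgeom
    induction M with
    | zero => simp
    | succ M ih =>
      rw [Finset.sum_range_succ, Finset.prod_range_succ, mul_sub, mul_one]
      have h2 : ∏ k ∈ Finset.range M, (1 - r ^ (k + 1)) ≤ 1 :=
        Finset.prod_le_one (fun k _ => sub_nonneg.2 (pow_le_one₀ h0 (by linarith)))
          fun k _ => by linarith [pow_nonneg h0 (k + 1)]
      have := mul_le_mul_of_nonneg_right h2 (pow_nonneg h0 (M + 1))
      linarith
  have e : 1 + r / (1 - 2 * r) = (1 - r / (1 - r))⁻¹ := by
    have : 1 - 2 * r ≠ 0 := by linarith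
    have : 1 - r ≠ 0 := by linarith
    have e' : 1 - r / (1 - r) = (1 - 2 * r) / (1 - r) := by field_simp; ring
    rw [e', inv_div, eq_div_iff ‹_›, add_mul, div_mul_cancel₀ _ ‹_›]
    ring
  rw [e]
  refine inv_anti₀ ?_ hprod
  rw [sub_pos, div_lt_one (by linarith)]
  linarith

/-- The inverse Euler product is close to `1` for small `q`. -/
lemma norm_inv_tprod_sub_one_le {q : ℂ} (hq : ‖q‖ < 1 / 2) :
    ‖(∏' k : ℕ, (1 - q ^ (k + 1)))⁻¹ - 1‖ ≤ ‖q‖ / (1 - 2 * ‖q‖) := by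
  have h := hasSum_p_mul_pow (q := q) (by linarith)
  have hs := summable_p_mul_pow (norm_nonneg q) (by linarith : ‖q‖ < 1)
  have hp0 : p 0 = 1 := by simp [p]
  have h' := (hasSum_nat_add_iff' 1).2 h
  simp only [Finset.range_one, Finset.sum_singleton, pow_zero, mul_one, hp0,
    Complex.ofReal_one] at h'
  have hle := tsum_p_mul_pow_le (norm_nonneg q) hq
  rw [hs.tsum_eq_zero_add, pow_zero, mul_one, hp0] at hle
  rw [← h'.tsum_eq]
  refine (tsum_of_norm_bounded ((summable_nat_add_iff 1).2 hs).hasSum fun n => ?_).trans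
    (by linarith)
  rw [norm_mul, norm_pow, Complex.norm_real, Real.norm_of_nonneg (p_nonneg _)]

open Complex in
lemma integral_exp_two_pi_int_mul (k : ℤ) :
    ∫ x in (-(1 / 2) : ℝ)..(1 / 2), cexp (2 * π * k * (-(x * I))) = if k = 0 then 1 else 0 := by
  split_ifs with hk
  · subst hk
    norm_num
  · have hc : (-(2 * π * k * I) : ℂ) ≠ 0 := by
      simp [hk, Real.pi_ne_zero, I_ne_zero]
    have h := integral_exp_mul_complex (a := -(1 / 2)) (b := 1 / 2) hc
    rw [show (fun x : ℝ => cexp (2 * π * k * (-(x * I)))) =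
      fun x : ℝ => cexp (-(2 * π * k * I) * x) by ext x; ring_nf, h, div_eq_zero_iff]
    left
    rw [sub_eq_zero, Complex.exp_eq_exp_iff_exists_int]
    refine ⟨-k, ?_⟩
    push_cast
    ring

open Complex in
/-- Cauchy's formula for the partition numbers, in terms of the Dedekind eta function. -/
theorem p_eq_integral_eta (n : ℕ) {y : ℝ} (hy : 0 < y) :
    (p n : ℂ) = ∫ x in (-(1 / 2) : ℝ)..(1 / 2),
      cexp (2 * π * (n - 1 / 24) * (y - x * I)) / ModularForm.eta (x + y * I) := by
  set q : ℝ → ℂ := fun x => cexp (2 * π * I * (x + y * I)) with hq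
  have hqn (x : ℝ) : ‖q x‖ = rexp (-(2 * π * y)) := by
    simp [hq, Complex.norm_exp]
  have hr : rexp (-(2 * π * y)) < 1 := by
    rw [Real.exp_lt_one_iff]
    have := Real.pi_pos
    simp only [Left.neg_neg_iff]
    positivity
  have hterm (x : ℝ) : cexp (2 * π * (n - 1 / 24) * (y - x * I)) / ModularForm.eta (x + y * I) =
      (∏' k : ℕ, (1 - q x ^ (k + 1)))⁻¹ * cexp (2 * π * n * (y - x * I)) := by
    simp only [ModularForm.eta, ModularForm.eta_q_eq_pow, Function.Periodic.qParam]
    rw [div_mul_eq_div_div, div_eq_mul_inv, mul_comm, ← Complex.exp_sub]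
    congr 2
    push_cast
    linear_combination (-(2 * π * y / 24) : ℂ) * I_sq
  have hpow (x : ℝ) (m : ℕ) : (p m : ℂ) * q x ^ m * cexp (2 * π * n * (y - x * I)) =
      (p m : ℂ) * cexp (2 * π * (n - m) * y) *
        cexp (2 * π * ((n - m : ℤ) : ℂ) * (-(x * I))) := by
    rw [hq, ← Complex.exp_nat_mul, mul_assoc, ← Complex.exp_add, mul_assoc (p m : ℂ),
      ← Complex.exp_add]
    congr 2
    push_cast
    linear_combination (2 * π * y * m : ℂ) * I_sq
  have hsum : HasSum (fun m : ℕ => ∫ x in (-(1 / 2) : ℝ)..(1 / 2),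
      (p m : ℂ) * q x ^ m * cexp (2 * π * n * (y - x * I)))
      (∫ x in (-(1 / 2) : ℝ)..(1 / 2),
        cexp (2 * π * (n - 1 / 24) * (y - x * I)) / ModularForm.eta (x + y * I)) := by
    refine intervalIntegral.hasSum_integral_of_dominated_convergence
      (fun m _ => p m * rexp (-(2 * π * y)) ^ m * rexp (2 * π * n * y)) (fun m => ?_)
      (fun m => .of_forall fun x _ => ?_) (.of_forall fun x _ => ?_) ?_
      (.of_forall fun x _ => ?_)
    · refine Continuous.aestronglyMeasurable ?_
      fun_prop
    · rw [norm_mul, norm_mul, norm_pow, hqn, Complex.norm_real,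
        Real.norm_of_nonneg (p_nonneg _), Complex.norm_exp]
      simp
    · exact (summable_p_mul_pow (Real.exp_nonneg _) hr).mul_right _
    · exact intervalIntegrable_const
    · rw [hterm]
      exact (hasSum_p_mul_pow (by rw [hqn]; exact hr)).mul_right _
  refine (hasSum_ite_eq n (p n : ℂ)).unique ?_
  convert hsum using 2 with m
  simp_rw [hpow]
  rw [intervalIntegral.integral_const_mul, integral_exp_two_pi_int_mul]
  by_cases h : m = n
  · subst h
    simp
  · rw [if_neg h, if_neg (by omega), mul_zero]

lemma inv_eta_eq (z : ℂ) : (ModularForm.eta z)⁻¹ =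
    Complex.exp (-(π * Complex.I * z / 12)) *
      (∏' k : ℕ, (1 - Complex.exp (2 * π * Complex.I * z) ^ (k + 1)))⁻¹ := by
  simp only [ModularForm.eta, ModularForm.eta_q_eq_pow, Function.Periodic.qParam]
  rw [mul_inv, ← Complex.exp_neg]
  congr 3
  push_cast
  ring

lemma exp_neg_two_pi_mul_lt {t : ℝ} (ht : 1 / 2 ≤ t) : rexp (-(2 * π * t)) < 1 / 22 := by
  have h22 : (22 : ℝ) < rexp 3.14 := by
    have := Real.sum_le_exp_of_nonneg (show (0 : ℝ) ≤ 3.14 by norm_num) 9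
    refine lt_of_lt_of_le ?_ this
    norm_num [Finset.sum_range_succ, Nat.factorial]
  rw [Real.exp_neg, ← one_div]
  refine one_div_lt_one_div_of_lt (by norm_num) (h22.trans_le (Real.exp_le_exp.2 ?_))
  nlinarith [Real.pi_gt_d2]

lemma norm_inv_tprod_exp_sub_one_le {z : ℂ} (hz : 1 / 2 ≤ z.im) :
    ‖(∏' k : ℕ, (1 - Complex.exp (2 * π * Complex.I * z) ^ (k + 1)))⁻¹ - 1‖ ≤
      11 / 10 * rexp (-(2 * π * z.im)) := by
  have hn : ‖Complex.exp (2 * π * Complex.I * z)‖ = rexp (-(2 * π * z.im)) := by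
    simp [Complex.norm_exp]
  have hle := exp_neg_two_pi_mul_lt hz
  refine (norm_inv_tprod_sub_one_le (by rw [hn]; linarith)).trans ?_
  rw [hn, div_le_iff₀ (by linarith)]
  nlinarith [Real.exp_pos (-(2 * π * z.im))]

lemma norm_inv_eta_le {z : ℂ} (hz : 1 / 2 ≤ z.im) :
    ‖(ModularForm.eta z)⁻¹‖ ≤ 1.05 * rexp (π * z.im / 12) := by
  have h1 := norm_inv_tprod_exp_sub_one_le hz
  have hle := exp_neg_two_pi_mul_lt hz
  rw [inv_eta_eq, norm_mul, mul_comm]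
  refine mul_le_mul ?_ ?_ (norm_nonneg _) (by norm_num)
  · have := norm_sub_norm_le (∏' k : ℕ, (1 - Complex.exp (2 * π * Complex.I * z) ^ (k + 1)))⁻¹ 1
    rw [norm_one] at this
    linarith
  · rw [Complex.norm_exp]
    refine (congrArg rexp ?_).le
    simp
    ring

lemma norm_discriminant_smul (g : Matrix.SpecialLinearGroup (Fin 2) ℤ) (z : UpperHalfPlane) :
    ‖ModularForm.discriminant (g • z)‖ =
      ‖UpperHalfPlane.denom g z‖ ^ 12 * ‖ModularForm.discriminant z‖ := by
  have h := congrFun (SlashInvariantForm.slash_action_generators_SL2Z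
    ModularForm.discriminant_S_invariant ModularForm.discriminant_T_invariant g) z
  rw [ModularForm.SL_slash_apply] at h
  have hd : UpperHalfPlane.denom g z ≠ 0 := UpperHalfPlane.denom_ne_zero _ z
  rw [← h, norm_mul, norm_zpow, mul_comm, mul_assoc, show (-12 : ℤ) = -((12 : ℕ) : ℤ) by rfl,
    zpow_neg, zpow_natCast, inv_mul_cancel₀ (pow_ne_zero _ (norm_ne_zero_iff.2 hd)), mul_one]

/-- Away from the cusp `0`, the function `1 / η` is at most the fourth root of its size there. -/
lemma norm_inv_eta_le_of_far {x y : ℝ} (hx : |x| ≤ 1 / 2) (hy : 0 < y) (hy2 : y < 1 / 2)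
    (hxy : 4 * y ^ 2 ≤ x ^ 2 + y ^ 2) :
    ‖(ModularForm.eta (x + y * Complex.I))⁻¹‖ ≤ 1.05 * rexp (π / (48 * y)) := by
  set z : UpperHalfPlane := ⟨x + y * Complex.I, by simpa using hy⟩ with hz
  have hzc : (z : ℂ) = x + y * Complex.I := rfl
  have hre : z.re = x := by simp [← UpperHalfPlane.coe_re, hzc]
  have him : z.im = y := by simp [← UpperHalfPlane.coe_im, hzc]
  obtain ⟨g, hg1, hg2⟩ := ModularGroup.exists_one_half_le_im_smul_and_norm_denom_le z
  have hdet : g 0 0 * g 1 1 - g 0 1 * g 1 0 = 1 := by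
    rw [← Matrix.det_fin_two, g.det_coe]
  have hden : Complex.normSq (UpperHalfPlane.denom g z) =
      (g 1 0 * x + g 1 1) ^ 2 + (g 1 0 * y) ^ 2 := by
    rw [ModularGroup.denom_apply, hzc, Complex.normSq_apply]
    simp
    ring
  have hims := ModularGroup.im_smul_eq_div_normSq g z
  have hpos : 0 < Complex.normSq (UpperHalfPlane.denom g z) :=
    UpperHalfPlane.normSq_denom_pos _ z.im_ne_zero
  have hfar : 4 * y ^ 2 ≤ Complex.normSq (UpperHalfPlane.denom g z) := by
    rw [hden]
    set c : ℤ := g 1 0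
    set e : ℤ := g 1 1
    rcases lt_trichotomy (c ^ 2) 1 with hc | hc | hc
    · exfalso
      have hc0 : c = 0 := by
        by_contra h
        have : 0 < c ^ 2 := by positivity
        omega
      have he : (e : ℝ) ^ 2 = 1 := by
        have : e = 1 ∨ e = -1 := by
          refine Int.isUnit_iff.1 (IsUnit.of_mul_eq_one (g 0 0) ?_)
          rw [hc0] at hdet
          linarith
        rcases this with h | h <;> simp [h]
      rw [hims, hden, hc0, him] at hg1
      simp [he] at hg1
      linarith
    · have hc' : (c : ℝ) ^ 2 = 1 := by exact_mod_cast hc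
      have hx2 := abs_le.1 hx
      have : (0 : ℝ) ≤ 2 * c * x * e + e ^ 2 := by
        rcases Int.isUnit_iff.1 (IsUnit.of_mul_eq_one c (by rw [← sq, hc])) with h | h <;> rw [h]
        · rcases le_or_gt e 0 with h' | h'
          · rcases h'.lt_or_eq with h' | h'
            · have : (e : ℝ) ≤ -1 := by exact_mod_cast Int.le_sub_one_of_lt h'
              push_cast
              nlinarith
            · simp [h']
          · have : (1 : ℝ) ≤ e := by exact_mod_cast h'
            push_cast
            nlinarith
        · rcases le_or_gt e 0 with h' | h'
          · rcases h'.lt_or_eq with h' | h'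
            · have : (e : ℝ) ≤ -1 := by exact_mod_cast Int.le_sub_one_of_lt h'
              push_cast
              nlinarith
            · simp [h']
          · have : (1 : ℝ) ≤ e := by exact_mod_cast h'
            push_cast
            nlinarith
      have e1 : ((c : ℝ) * x + e) ^ 2 + (c * y) ^ 2 =
          c ^ 2 * (x ^ 2 + y ^ 2) + (2 * c * x * e + e ^ 2) := by ring
      rw [e1, hc']
      linarith
    · have h4 : 4 ≤ c ^ 2 := by
        have : 2 ≤ |c| := by
          by_contra h
          have : |c| ≤ 1 := by omega
          have := sq_le_one_iff_abs_le_one c |>.2 this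
          omega
        rw [← sq_abs]
        nlinarith
      have h4' : (4 : ℝ) ≤ (c : ℝ) ^ 2 := by exact_mod_cast h4
      nlinarith [sq_nonneg ((c : ℝ) * x + e), sq_nonneg y]
  have him2 : (g • z).im ≤ 1 / (4 * y) := by
    rw [hims, him, div_le_div_iff₀ hpos (by positivity)]
    nlinarith
  have hle := norm_inv_eta_le (z := (g • z : UpperHalfPlane)) hg1
  have hexp : rexp (π * (g • z).im / 12) ≤ rexp (π / (48 * y)) := by
    refine Real.exp_le_exp.2 ?_
    have := mul_le_mul_of_nonneg_left him2 Real.pi_pos.le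
    calc π * (g • z).im / 12 ≤ π * (1 / (4 * y)) / 12 := by linarith
      _ = π / (48 * y) := by field_simp; norm_num
  refine le_trans ?_ (hle.trans (mul_le_mul_of_nonneg_left hexp (by norm_num)))
  rw [norm_inv, norm_inv, ← hzc]
  refine inv_anti₀ (norm_pos_iff.2 (ModularForm.eta_ne_zero (g • z).im_pos)) ?_
  refine le_of_pow_le_pow_left₀ (n := 24) (by norm_num) (norm_nonneg _) ?_
  have hD := norm_discriminant_smul g z
  simp only [ModularForm.discriminant, norm_pow] at hD
  rw [hD]
  refine mul_le_of_le_one_left (by positivity) (pow_le_one₀ (norm_nonneg _) hg2)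

lemma sqrt_sq {w : ℂ} (hw : w ≠ 0) : Complex.sqrt w ^ 2 = w := by
  rw [sqrt_eq_exp hw, ← Complex.exp_nat_mul, Nat.cast_ofNat, mul_div_cancel₀ _ two_ne_zero,
    Complex.exp_log hw]

lemma inv_eta_I_mul {w : ℂ} (hw : 0 < w.re) :
    (ModularForm.eta (Complex.I * w))⁻¹ =
      Complex.sqrt w * (ModularForm.eta (Complex.I / w))⁻¹ := by
  have hw0 : w ≠ 0 := by
    rintro rfl
    simp at hw
  have hz : 0 < (Complex.I * w).im := by simpa using hw
  have h := ModularForm.eta_comp_eq_csqrt_I_inv hz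
  simp only [Function.comp_apply, Pi.smul_apply, Pi.mul_apply, smul_eq_mul] at h
  have hI : -1 / (Complex.I * w) = Complex.I / w := by
    field_simp
    simp
  have hs : Complex.sqrt (Complex.I * w) = Complex.sqrt Complex.I * Complex.sqrt w := by
    have ha := abs_lt.1 (Complex.abs_arg_lt_pi_div_two_iff.2 (Or.inl hw))
    rw [sqrt_eq_exp (mul_ne_zero Complex.I_ne_zero hw0), sqrt_eq_exp Complex.I_ne_zero,
      sqrt_eq_exp hw0, ← Complex.exp_add, Complex.log_mul Complex.I_ne_zero hw0, add_div]
    rw [Complex.arg_I]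
    constructor <;> linarith [ha.1, ha.2]
  have hI0 : Complex.sqrt Complex.I ≠ 0 := by
    rw [sqrt_eq_exp Complex.I_ne_zero]
    exact Complex.exp_ne_zero _
  have hw0' : Complex.sqrt w ≠ 0 := by
    rw [sqrt_eq_exp hw0]
    exact Complex.exp_ne_zero _
  rw [hI, hs, mul_assoc, inv_mul_cancel_left₀ hI0] at h
  rw [h, mul_inv, mul_inv_cancel_left₀ hw0']

lemma norm_inv_eta_sub_le {x y : ℝ} (hy : 0 < y) (hy2 : y ≤ 1 / 2)
    (hxy : x ^ 2 + y ^ 2 ≤ 4 * y ^ 2) :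
    ‖(ModularForm.eta (x + y * Complex.I))⁻¹ -
      Complex.sqrt (y - x * Complex.I) * Complex.exp (π / (12 * (y - x * Complex.I)))‖ ≤ 1 := by
  set w : ℂ := y - x * Complex.I with hw
  have hre : w.re = y := by simp [hw]
  have hz : (x + y * Complex.I : ℂ) = Complex.I * w := by
    rw [hw]
    linear_combination (x : ℂ) * Complex.I_sq
  have hnw : Complex.normSq w = x ^ 2 + y ^ 2 := by
    rw [Complex.normSq_apply]
    simp [hw]
    ring
  have him : (Complex.I / w).im = y / (x ^ 2 + y ^ 2) := by
    rw [Complex.div_im, hnw, hre]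
    simp
  have hpos : 0 < x ^ 2 + y ^ 2 := by positivity
  have him2 : 1 / 2 ≤ (Complex.I / w).im := by
    rw [him, div_le_div_iff₀ (by norm_num) hpos]
    nlinarith
  have h1 := norm_inv_tprod_exp_sub_one_le him2
  rw [hz, inv_eta_I_mul (hre ▸ hy), inv_eta_eq, ← mul_sub]
  have e : Complex.exp (-(π * Complex.I * (Complex.I / w) / 12)) = Complex.exp (π / (12 * w)) := by
    congr 1
    rw [mul_div_assoc', mul_assoc, Complex.I_mul_I]
    field_simp
  have hnexp : ‖Complex.exp (π / (12 * w))‖ = rexp (π * (Complex.I / w).im / 12) := by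
    rw [← e, Complex.norm_exp]
    congr 1
    simp [mul_assoc]
    ring
  have hw0 : w ≠ 0 := Complex.normSq_pos.1 (hnw ▸ hpos)
  have hsqrt : ‖Complex.sqrt w‖ ≤ 1 := by
    rw [← sq_le_one_iff₀ (norm_nonneg _), ← norm_pow, sqrt_sq hw0,
      ← sq_le_one_iff₀ (norm_nonneg _), ← Complex.normSq_eq_norm_sq, hnw]
    nlinarith
  rw [e]
  nth_rw 2 [← mul_one (Complex.exp (π / (12 * w)))]
  rw [← mul_sub, norm_mul, norm_mul, hnexp]
  set t := (Complex.I / w).im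
  have hexp : rexp (π * t / 12) * rexp (-(2 * π * t)) ≤ 1 / 2 := by
    rw [← Real.exp_add]
    refine (Real.exp_le_exp.2 (show _ ≤ (-1 : ℝ) from ?_)).trans ?_
    · nlinarith [Real.pi_gt_three]
    · linarith [Real.exp_neg_one_lt_half]
  have h2 := mul_le_mul_of_nonneg_left h1 (Real.exp_nonneg (π * t / 12))
  refine mul_le_one₀ hsqrt (by positivity) (h2.trans ?_)
  linarith

lemma continuous_integrand {y : ℝ} (hy : 0 < y) (c : ℂ) :
    Continuous fun x : ℝ => Complex.exp (c * (y - x * Complex.I)) *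
      (Complex.sqrt (y - x * Complex.I) * Complex.exp (π / (12 * (y - x * Complex.I)))) := by
  have hre (x : ℝ) : 0 < (y - x * Complex.I : ℂ).re := by simpa using hy
  have hne (x : ℝ) : (y - x * Complex.I : ℂ) ≠ 0 := by
    intro h
    simpa [h] using hre x
  have hs : Continuous fun x : ℝ => Complex.sqrt (y - x * Complex.I) :=
    continuous_iff_continuousAt.2 fun x =>
      ContinuousAt.comp (f := fun x : ℝ => (y - x * Complex.I : ℂ))
        (Complex.continuousAt_sqrt (Or.inl (hre x).le)) (by fun_prop)
  refine Continuous.mul (by fun_prop) (hs.mul ?_)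
  refine Complex.continuous_exp.comp (continuous_const.div (by fun_prop) fun x => ?_)
  exact mul_ne_zero (by norm_num) (hne x)

lemma continuous_eta_line {y : ℝ} (hy : 0 < y) :
    Continuous fun x : ℝ => ModularForm.eta (x + y * Complex.I) :=
  continuous_iff_continuousAt.2 fun x =>
    ContinuousAt.comp (g := ModularForm.eta) (f := fun x : ℝ => (x + y * Complex.I : ℂ))
      (ModularForm.differentiableAt_eta_of_mem_upperHalfPlaneSet
        (show 0 < (x + y * Complex.I : ℂ).im by simpa using hy)).continuousAt (by fun_prop)

/-- Only a short arc around the cusp `0` matters for the partition numbers. -/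
lemma norm_p_sub_integral_le (n : ℕ) (hn : 1 ≤ n) :
    ‖(p n : ℂ) - ∫ x in (-(√3 / (2 * √(24 * n - 1))))..(√3 / (2 * √(24 * n - 1))),
      Complex.exp (2 * π * (n - 1 / 24) * ((1 / (2 * √(24 * n - 1)) : ℝ) - x * Complex.I)) *
      (Complex.sqrt ((1 / (2 * √(24 * n - 1)) : ℝ) - x * Complex.I) *
        Complex.exp (π / (12 * ((1 / (2 * √(24 * n - 1)) : ℝ) - x * Complex.I))))‖ ≤
      1.05 * rexp (mu n / 2) := by
  have hn' : (1 : ℝ) ≤ n := by exact_mod_cast hn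
  have hr2 : √(24 * n - 1) ^ 2 = 24 * (n : ℝ) - 1 := Real.sq_sqrt (by linarith)
  have hmu : mu n = π / 6 * √(24 * n - 1) := rfl
  set r := √(24 * (n : ℝ) - 1) with hr
  have hr4 : 4 < r := by
    rw [hr, Real.lt_sqrt (by norm_num)]
    linarith
  set y : ℝ := 1 / (2 * r) with hy
  set x₀ : ℝ := √3 / (2 * r) with hx₀
  have hy0 : 0 < y := by positivity
  have hy2 : y < 1 / 2 := by
    rw [hy, div_lt_div_iff₀ (by positivity) (by norm_num)]
    linarith
  have hx00 : 0 < x₀ := by positivity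
  have hx0sq : x₀ ^ 2 = 3 * y ^ 2 := by
    rw [hx₀, hy, div_pow, div_pow, Real.sq_sqrt (by norm_num)]
    ring
  have hx02 : x₀ < 1 / 2 := by
    have : √3 < 2 := by
      rw [Real.sqrt_lt' (by norm_num)]
      norm_num
    rw [hx₀, div_lt_div_iff₀ (by positivity) (by norm_num)]
    linarith
  set C : ℝ := 1.05 * rexp (mu n / 2) with hC
  set f : ℝ → ℂ := fun x =>
    Complex.exp (2 * π * (n - 1 / 24) * (y - x * Complex.I)) /
      ModularForm.eta (x + y * Complex.I) with hf
  set g : ℝ → ℂ := fun x =>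
    Complex.exp (2 * π * (n - 1 / 24) * (y - x * Complex.I)) *
      (Complex.sqrt (y - x * Complex.I) * Complex.exp (π / (12 * (y - x * Complex.I)))) with hg
  have hfc : Continuous f := by
    refine Continuous.div (by fun_prop) (continuous_eta_line hy0) fun x => ?_
    exact ModularForm.eta_ne_zero (show 0 < (x + y * Complex.I : ℂ).im by simpa using hy0)
  have hgc : Continuous g := continuous_integrand hy0 _
  have hexp (x : ℝ) : ‖Complex.exp (2 * π * (n - 1 / 24) * (y - x * Complex.I))‖ =
      rexp (mu n / 4) := by
    rw [Complex.norm_exp]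
    congr 1
    have e : (2 * π * (n - 1 / 24) * (y - x * Complex.I) : ℂ).re = 2 * π * (n - 1 / 24) * y := by
      have : (2 * π * (n - 1 / 24) * (y - x * Complex.I) : ℂ) =
          (2 * π * (n - 1 / 24) * y : ℝ) + (-(2 * π * (n - 1 / 24) * x) : ℝ) * Complex.I := by
        push_cast
        ring
      rw [this]
      simp only [Complex.add_re, Complex.ofReal_re, Complex.re_ofReal_mul, Complex.I_re, mul_zero,
        add_zero]
    rw [e, hmu, hy, show (n : ℝ) - 1 / 24 = r ^ 2 / 24 by rw [hr2]; ring]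
    field_simp
    norm_num
  have hmu4 : π / (48 * y) = mu n / 4 := by
    rw [hmu, hy]
    field_simp
    norm_num
  have hhalf : rexp (mu n / 4) * rexp (mu n / 4) = rexp (mu n / 2) := by
    rw [← Real.exp_add]
    ring_nf
  have hfar (x : ℝ) (hx : |x| ≤ 1 / 2) (hx' : x₀ ≤ |x|) : ‖f x‖ ≤ C := by
    simp only [hf]
    rw [div_eq_mul_inv (Complex.exp _), norm_mul, hexp]
    have h1 := norm_inv_eta_le_of_far hx hy0 hy2 (by
      have : x₀ ^ 2 ≤ x ^ 2 := by
        rw [← sq_abs x]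
        exact pow_le_pow_left₀ hx00.le hx' 2
      linarith)
    rw [hmu4] at h1
    have := mul_le_mul_of_nonneg_left h1 (Real.exp_nonneg (mu n / 4))
    rw [hC, ← hhalf]
    linarith
  have hnear (x : ℝ) (hx : |x| ≤ x₀) : ‖f x - g x‖ ≤ C := by
    simp only [hf, hg]
    rw [div_eq_mul_inv (Complex.exp _), ← mul_sub, norm_mul, hexp]
    have h1 := norm_inv_eta_sub_le (x := x) hy0 hy2.le (by
      have : x ^ 2 ≤ x₀ ^ 2 := by
        rw [← sq_abs x]
        exact pow_le_pow_left₀ (abs_nonneg x) hx 2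
      linarith)
    have := mul_le_mul_of_nonneg_left h1 (Real.exp_nonneg (mu n / 4))
    have h2 : (1 : ℝ) ≤ rexp (mu n / 4) := by
      rw [Real.one_le_exp_iff, hmu]
      positivity
    rw [hC, ← hhalf]
    nlinarith
  have hi (a b : ℝ) : IntervalIntegrable f MeasureTheory.volume a b := hfc.intervalIntegrable a b
  rw [p_eq_integral_eta n hy0, ← intervalIntegral.integral_add_adjacent_intervals (hi _ (-x₀))
    (hi _ _), ← intervalIntegral.integral_add_adjacent_intervals (hi (-x₀) x₀) (hi _ _)]
  have h1 : ‖∫ x in (-(1 / 2))..(-x₀), f x‖ ≤ C * |(-x₀) - (-(1 / 2))| :=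
    intervalIntegral.norm_integral_le_of_norm_le_const fun x hx => by
      rw [Set.uIoc_of_le (by linarith)] at hx
      exact hfar x (abs_le.2 ⟨by linarith [hx.1], by linarith [hx.2]⟩)
        (le_abs.2 (Or.inr (by linarith [hx.2])))
  have h2 : ‖∫ x in x₀..(1 / 2), f x‖ ≤ C * |1 / 2 - x₀| :=
    intervalIntegral.norm_integral_le_of_norm_le_const fun x hx => by
      rw [Set.uIoc_of_le (by linarith)] at hx
      exact hfar x (abs_le.2 ⟨by linarith [hx.1], by linarith [hx.2]⟩)
        (le_abs.2 (Or.inl (by linarith [hx.1])))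
  have h3 : ‖∫ x in (-x₀)..x₀, (f x - g x)‖ ≤ C * |x₀ - (-x₀)| :=
    intervalIntegral.norm_integral_le_of_norm_le_const fun x hx => by
      rw [Set.uIoc_of_le (by linarith)] at hx
      exact hnear x (abs_le.2 ⟨by linarith [hx.1], by linarith [hx.2]⟩)
  rw [intervalIntegral.integral_sub (hi _ _) (hgc.intervalIntegrable _ _)] at h3
  rw [abs_of_nonneg (by linarith)] at h1 h2 h3
  calc _ = ‖(∫ x in (-(1 / 2))..(-x₀), f x) + ((∫ x in (-x₀)..x₀, f x) - ∫ x in (-x₀)..x₀, g x) +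
        ∫ x in x₀..(1 / 2), f x‖ := by congr 1; ring
    _ ≤ C * (-x₀ - -(1 / 2)) + C * (x₀ - -x₀) + C * (1 / 2 - x₀) :=
        (norm_add₃_le).trans (by linarith)
    _ = C := by ring

/-- A primitive of `2 β² v² exp (β² v² + α² / v²)`, built from a primitive `F` of `exp (u²)`. -/
lemma hasDerivAt_primitive {F : ℂ → ℂ} (hF : ∀ z, HasDerivAt F (Complex.exp (z ^ 2)) z)
    {α β v : ℂ} (hβ : β ≠ 0) (hv : v ≠ 0) :
    HasDerivAt (fun v => v * Complex.exp (β ^ 2 * v ^ 2 + α ^ 2 / v ^ 2) +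
      (α - 1 / (2 * β)) * Complex.exp (2 * (α * β)) * F (β * v - α / v) -
      (α + 1 / (2 * β)) * Complex.exp (-(2 * (α * β))) * F (β * v + α / v))
      (2 * β ^ 2 * v ^ 2 * Complex.exp (β ^ 2 * v ^ 2 + α ^ 2 / v ^ 2)) v := by
  have hid := hasDerivAt_id' v
  have hinv : HasDerivAt (fun v => α / v) (-(α / v ^ 2)) v := by
    have := (hasDerivAt_const v α).div hid hv
    refine this.congr_deriv ?_
    field_simp
    ring
  have hsqi : HasDerivAt (fun v => α ^ 2 / v ^ 2) (-(2 * α ^ 2 / v ^ 3)) v := by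
    have := (hasDerivAt_const v (α ^ 2)).div (hid.pow 2) (pow_ne_zero 2 hv)
    refine this.congr_deriv ?_
    field_simp
    simp
    ring
  have hφ := ((hid.pow 2).const_mul (β ^ 2)).add hsqi
  have h1 := hid.mul hφ.cexp
  have h2 := ((hF (β * v - α / v)).comp v ((hid.const_mul β).sub hinv)).const_mul
    ((α - 1 / (2 * β)) * Complex.exp (2 * (α * β)))
  have h3 := ((hF (β * v + α / v)).comp v ((hid.const_mul β).add hinv)).const_mul
    ((α + 1 / (2 * β)) * Complex.exp (-(2 * (α * β))))
  refine ((h1.add h2).sub h3).congr_deriv ?_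
  have e1 : Complex.exp (2 * (α * β)) * Complex.exp ((β * v - α / v) ^ 2) =
      Complex.exp (β ^ 2 * v ^ 2 + α ^ 2 / v ^ 2) := by
    rw [← Complex.exp_add]
    congr 1
    field_simp
    ring
  have e2 : Complex.exp (-(2 * (α * β))) * Complex.exp ((β * v + α / v) ^ 2) =
      Complex.exp (β ^ 2 * v ^ 2 + α ^ 2 / v ^ 2) := by
    rw [← Complex.exp_add]
    congr 1
    field_simp
    ring
  have key : (α - 1 / (2 * β)) * (β + α / v ^ 2) - (α + 1 / (2 * β)) * (β - α / v ^ 2) =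
      2 * α ^ 2 / v ^ 2 - 1 := by
    field_simp
    ring
  have key2 : v * (2 * α ^ 2 / v ^ 3) = 2 * α ^ 2 / v ^ 2 := by
    field_simp
  simp only [Pi.add_apply, Pi.pow_apply]
  linear_combination (α - 1 / (2 * β)) * (β + α / v ^ 2) * e1 -
    (α + 1 / (2 * β)) * (β - α / v ^ 2) * e2 +
    Complex.exp (β ^ 2 * v ^ 2 + α ^ 2 / v ^ 2) * (key - key2)

lemma hasDerivAt_sqrt_line {y : ℝ} (hy : 0 < y) (x : ℝ) :
    HasDerivAt (fun x : ℝ => Complex.sqrt (y - x * Complex.I))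
      (-Complex.I / (2 * Complex.sqrt (y - x * Complex.I))) x := by
  have hre : 0 < (y - x * Complex.I : ℂ).re := by simpa using hy
  have h1 := Complex.hasDerivAt_sqrt (z := y - x * Complex.I) (Or.inl hre)
  have h2 : HasDerivAt (fun x : ℂ => (y - x * Complex.I : ℂ)) (-Complex.I) (x : ℂ) := by
    simpa using ((hasDerivAt_id' (x : ℂ)).mul_const Complex.I).const_sub (y : ℂ)
  refine (HasDerivAt.comp (x : ℂ) h1 h2).comp_ofReal.congr_deriv ?_
  rw [neg_div, Complex.cpow_neg, Complex.sqrt, one_div]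
  ring

/-- The truncated Bessel integral in closed form, up to a Gaussian integral. -/
lemma integral_sqrt_mul_exp {s a : ℝ} (hs : 0 < s) (ha : 0 < a) :
    ∫ x in (-(√3 / 2 * s ^ 2))..(√3 / 2 * s ^ 2),
      Complex.sqrt ((s ^ 2 / 2 : ℝ) - x * Complex.I) *
        Complex.exp ((a / s) ^ 2 * ((s ^ 2 / 2 : ℝ) - x * Complex.I) +
          (a * s) ^ 2 / ((s ^ 2 / 2 : ℝ) - x * Complex.I)) =
      ((s ^ 2 / a ^ 2 * (s * rexp (a ^ 2) + (a * s - s / (2 * a)) * rexp (2 * a ^ 2) *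
        ∫ t in (-a)..a, rexp (-t ^ 2)) : ℝ) : ℂ) := by
  obtain ⟨F, hF⟩ := Differentiable.isExactOn_univ
    (show Differentiable ℂ fun z : ℂ => Complex.exp (z ^ 2) by fun_prop)
  have hF' (z : ℂ) : HasDerivAt F (Complex.exp (z ^ 2)) z := hF z trivial
  have hs' : (s : ℂ) ≠ 0 := by exact_mod_cast hs.ne'
  have ha' : (a : ℂ) ≠ 0 := by exact_mod_cast ha.ne'
  set y : ℝ := s ^ 2 / 2 with hy
  have hy0 : 0 < y := by positivity
  set v : ℝ → ℂ := fun x => Complex.sqrt (y - x * Complex.I) with hv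
  have hre (x : ℝ) : 0 < (y - x * Complex.I : ℂ).re := by simpa using hy0
  have hne (x : ℝ) : (y - x * Complex.I : ℂ) ≠ 0 := by
    intro h
    simpa [h] using hre x
  have hvsq (x : ℝ) : v x ^ 2 = y - x * Complex.I := sqrt_sq (hne x)
  have hv0 (x : ℝ) : v x ≠ 0 := by
    intro h
    apply hne x
    rw [← hvsq, h]
    ring
  have hvd (x : ℝ) : HasDerivAt v (-Complex.I / (2 * v x)) x := hasDerivAt_sqrt_line hy0 x
  have hvc : Continuous v := continuous_iff_continuousAt.2 fun x => (hvd x).continuousAt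
  set β : ℂ := a / s with hβ
  set α : ℂ := a * s with hα
  have hβ0 : β ≠ 0 := div_ne_zero ha' hs'
  set G : ℂ → ℂ := fun v => v * Complex.exp (β ^ 2 * v ^ 2 + α ^ 2 / v ^ 2) +
      (α - 1 / (2 * β)) * Complex.exp (2 * (α * β)) * F (β * v - α / v) -
      (α + 1 / (2 * β)) * Complex.exp (-(2 * (α * β))) * F (β * v + α / v) with hG
  have hGd (x : ℝ) : HasDerivAt (fun x => G (v x))
      (-Complex.I * β ^ 2 * (v x * Complex.exp (β ^ 2 * v x ^ 2 + α ^ 2 / v x ^ 2))) x := by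
    refine ((hasDerivAt_primitive hF' (α := α) hβ0 (hv0 x)).comp x (hvd x)).congr_deriv ?_
    have := hv0 x
    field_simp
  have hcont : Continuous fun x =>
      -Complex.I * β ^ 2 * (v x * Complex.exp (β ^ 2 * v x ^ 2 + α ^ 2 / v x ^ 2)) := by
    refine continuous_const.mul (hvc.mul (Complex.continuous_exp.comp ?_))
    exact (continuous_const.mul (hvc.pow 2)).add
      (continuous_const.div (hvc.pow 2) fun x => pow_ne_zero 2 (hv0 x))
  have hFTC := intervalIntegral.integral_eq_sub_of_hasDerivAt (fun x _ => hGd x)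
    (hcont.intervalIntegrable (-(√3 / 2 * s ^ 2)) (√3 / 2 * s ^ 2))
  rw [intervalIntegral.integral_const_mul] at hFTC
  have h3 : ((√3 : ℝ) : ℂ) ^ 2 = 3 := by
    rw [← Complex.ofReal_pow, Real.sq_sqrt (by norm_num)]
    norm_num
  set c : ℂ := √3 / 2 - Complex.I / 2 with hc
  set c' : ℂ := √3 / 2 + Complex.I / 2 with hc'
  have hcc : c * c' = 1 := by
    linear_combination h3 / 4 - Complex.I_sq / 4
  have hc0 : c ≠ 0 := left_ne_zero_of_mul_eq_one hcc
  have hc0' : c' ≠ 0 := right_ne_zero_of_mul_eq_one hcc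
  have hcsq : c ^ 2 + c' ^ 2 = 1 := by
    linear_combination h3 / 2 + Complex.I_sq / 2
  have hsub : c - c' = -Complex.I := by
    rw [hc, hc']
    ring
  have hv1 : v (√3 / 2 * s ^ 2) = s * c := by
    have e : (y - (√3 / 2 * s ^ 2 : ℝ) * Complex.I : ℂ) = (s * c) ^ 2 := by
      rw [hy]
      push_cast
      linear_combination (-(s : ℂ) ^ 2 / 4) * (h3 + Complex.I_sq)
    simp only [hv]
    rw [e, Complex.sqrt, Complex.sq_cpow_two_inv]
    simp [hc]
    positivity
  have hv2 : v (-(√3 / 2 * s ^ 2)) = s * c' := by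
    have e : (y - (-(√3 / 2 * s ^ 2) : ℝ) * Complex.I : ℂ) = (s * c') ^ 2 := by
      rw [hy]
      push_cast
      linear_combination (-(s : ℂ) ^ 2 / 4) * (h3 + Complex.I_sq)
    simp only [hv]
    rw [e, Complex.sqrt, Complex.sq_cpow_two_inv]
    simp [hc']
    positivity
  have hgauss : F (-(a * Complex.I)) - F (a * Complex.I) =
      -Complex.I * ((∫ t in (-a)..a, rexp (-t ^ 2) : ℝ) : ℂ) := by
    have hd (t : ℝ) : HasDerivAt (fun t : ℝ => F (-(t * Complex.I)))
        (-Complex.I * ((rexp (-t ^ 2) : ℝ) : ℂ)) t := by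
      have h2 : HasDerivAt (fun x : ℂ => -(x * Complex.I)) (-Complex.I) (t : ℂ) := by
        simpa using (hasDerivAt_id' (t : ℂ)).mul_const (-Complex.I)
      refine (HasDerivAt.comp (t : ℂ) (hF' _) h2).comp_ofReal.congr_deriv ?_
      rw [mul_comm]
      congr 1
      push_cast
      congr 1
      rw [neg_sq, mul_pow, Complex.I_sq]
      ring
    have h := intervalIntegral.integral_eq_sub_of_hasDerivAt (fun x _ => hd x)
      (Continuous.intervalIntegrable (by fun_prop) (-a) a)
    rw [intervalIntegral.integral_const_mul, intervalIntegral.integral_ofReal] at h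
    rw [h]
    simp
  have hG1 : G (s * c) = s * c * Complex.exp (a ^ 2) +
      (α - 1 / (2 * β)) * Complex.exp (2 * (α * β)) * F (-(a * Complex.I)) -
      (α + 1 / (2 * β)) * Complex.exp (-(2 * (α * β))) * F (a * √3) := by
    have e1 : β * (s * c) = a * c := by rw [hβ]; field_simp
    have e2 : α / (s * c) = a * c' := by
      rw [hα]
      field_simp
      linear_combination -hcc
    simp only [hG]
    rw [← mul_pow, ← div_pow, e1, e2]
    congr 4
    · linear_combination (a : ℂ) ^ 2 * hcsq
    · linear_combination (a : ℂ) * hsub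
    · rw [hc, hc']
      ring
  have hG2 : G (s * c') = s * c' * Complex.exp (a ^ 2) +
      (α - 1 / (2 * β)) * Complex.exp (2 * (α * β)) * F (a * Complex.I) -
      (α + 1 / (2 * β)) * Complex.exp (-(2 * (α * β))) * F (a * √3) := by
    have e1 : β * (s * c') = a * c' := by rw [hβ]; field_simp
    have e2 : α / (s * c') = a * c := by
      rw [hα]
      field_simp
      linear_combination -hcc
    simp only [hG]
    rw [← mul_pow, ← div_pow, e1, e2]
    congr 4
    · linear_combination (a : ℂ) ^ 2 * hcsq
    · linear_combination -(a : ℂ) * hsub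
    · rw [hc, hc']
      ring
  rw [hv1, hv2, hG1, hG2] at hFTC
  simp only [hvsq] at hFTC
  have hαβ : α * β = a ^ 2 := by
    rw [hα, hβ]
    field_simp
  have hβinv : 1 / (2 * β) = s / (2 * a) := by
    rw [hβ]
    field_simp
  rw [hαβ, hβinv] at hFTC
  have hmul : (-Complex.I * β ^ 2) ≠ 0 :=
    mul_ne_zero (neg_ne_zero.2 Complex.I_ne_zero) (pow_ne_zero 2 hβ0)
  refine mul_left_cancel₀ hmul (hFTC.trans ?_)
  push_cast
  have hβs : β ^ 2 * (s ^ 2 / a ^ 2) = 1 := by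
    rw [hβ]
    field_simp
  linear_combination (s : ℂ) * Complex.exp (a ^ 2) * hsub +
    (α - s / (2 * a)) * Complex.exp (2 * a ^ 2) * hgauss +
    Complex.I * (s * Complex.exp (a ^ 2) + (a * s - s / (2 * a)) * Complex.exp (2 * a ^ 2) *
        ((∫ t in (-a)..a, rexp (-t ^ 2) : ℝ) : ℂ)) * hβs

lemma integral_Ioi_exp_neg_sq_le {a : ℝ} (ha : 0 ≤ a) :
    ∫ t in Set.Ioi a, rexp (-t ^ 2) ≤ rexp (-a ^ 2) * (√π / 2) := by
  have hg := integral_gaussian_Ioi 1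
  have hi : MeasureTheory.Integrable fun t : ℝ => rexp (-t ^ 2) := by
    simpa using integrable_exp_neg_mul_sq (b := 1) one_pos
  simp only [neg_mul, one_mul, div_one] at hg
  have hshift := (MeasureTheory.measurePreserving_add_right
    MeasureTheory.volume a).setIntegral_preimage_emb (measurableEmbedding_addRight a)
    (fun t => rexp (-t ^ 2)) (Set.Ioi a)
  have hpre : (fun x => x + a) ⁻¹' Set.Ioi a = Set.Ioi 0 := by
    ext x
    simp
  rw [hpre] at hshift
  rw [← hshift, ← hg, ← MeasureTheory.integral_const_mul]
  refine MeasureTheory.setIntegral_mono_on (hi.comp_add_right a).integrableOn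
    (hi.const_mul _).integrableOn measurableSet_Ioi fun x hx => ?_
  rw [← Real.exp_add]
  refine Real.exp_le_exp.2 ?_
  have : 0 ≤ x * a := mul_nonneg (le_of_lt hx) ha
  nlinarith

lemma abs_integral_exp_neg_sq_sub_le {a : ℝ} (ha : 0 ≤ a) :
    |(∫ t in (-a)..a, rexp (-t ^ 2)) - √π| ≤ √π * rexp (-a ^ 2) := by
  have hg := integral_gaussian_Ioi 1
  have hi : MeasureTheory.Integrable fun t : ℝ => rexp (-t ^ 2) := by
    simpa using integrable_exp_neg_mul_sq (b := 1) one_pos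
  simp only [neg_mul, one_mul, div_one] at hg
  have hint (b c : ℝ) : IntervalIntegrable (fun t : ℝ => rexp (-t ^ 2)) MeasureTheory.volume b c :=
    hi.intervalIntegrable
  have h1 := intervalIntegral.integral_add_adjacent_intervals (hint (-a) 0) (hint 0 a)
  have h2 : ∫ t in (-a)..0, rexp (-t ^ 2) = ∫ t in 0..a, rexp (-t ^ 2) := by
    have := intervalIntegral.integral_comp_neg (a := 0) (b := a) fun t => rexp (-t ^ 2)
    simp only [neg_sq, neg_zero] at this
    exact this.symm
  have h3 := intervalIntegral.integral_interval_add_Ioi (a := 0) (b := a)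
    hi.integrableOn hi.integrableOn
  have h4 := integral_Ioi_exp_neg_sq_le ha
  have h5 : 0 ≤ ∫ t in Set.Ioi a, rexp (-t ^ 2) :=
    MeasureTheory.integral_nonneg fun t => (Real.exp_pos _).le
  rw [abs_le]
  constructor <;> linarith

lemma T_eq {x : ℝ} (hx : 1 ≤ x) :
    T x = 2 * √3 / (24 * x - 1) * (1 - 1 / mu x) * rexp (mu x) := by
  have h : mu x ^ 2 = π ^ 2 / 36 * (24 * x - 1) := by
    rw [mu, mul_pow, Real.sq_sqrt (by linarith)]
    ring
  have h3 : √3 ^ 2 = 3 := Real.sq_sqrt (by norm_num)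
  have h0 : 24 * x - 1 ≠ 0 := by linarith
  rw [T, h, d]
  congr 2
  field_simp
  linear_combination (-12) * h3

set_option maxHeartbeats 1000000 in
/-- The partition numbers agree with `T` up to the square root of the main exponential. -/
lemma abs_p_sub_T_le (n : ℕ) (hn : 400 ≤ n) : |p n - T n| ≤ 1.1 * rexp (mu n / 2) := by
  have hn' : (400 : ℝ) ≤ n := by exact_mod_cast hn
  have hcirc := norm_p_sub_integral_le n (by omega)
  have hr2 : √(24 * n - 1) ^ 2 = 24 * (n : ℝ) - 1 := Real.sq_sqrt (by linarith)
  have hmu : mu n = π / 6 * √(24 * n - 1) := rfl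
  have hT := T_eq (x := n) (by linarith)
  rw [← hr2] at hT
  set r := √(24 * (n : ℝ) - 1) with hr
  have hr4 : 90 < r := by
    rw [hr, Real.lt_sqrt (by norm_num)]
    linarith
  have hr0 : 0 < r := by linarith
  set s := √(1 / r) with hs
  set a := √(mu n / 2) with ha
  have hmu0 : 0 < mu n := by
    rw [hmu]
    positivity
  have hs2 : s ^ 2 = 1 / r := Real.sq_sqrt (by positivity)
  have ha2 : a ^ 2 = mu n / 2 := Real.sq_sqrt (by positivity)
  have hs0 : 0 < s := by rw [hs]; positivity
  have ha0 : 0 < a := by rw [ha]; positivity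
  have hI := integral_sqrt_mul_exp hs0 ha0
  set J := ∫ t in (-a)..a, rexp (-t ^ 2) with hJ
  have hβ : (a / s) ^ 2 = 2 * π * (n - 1 / 24) := by
    rw [div_pow, ha2, hs2, hmu, show (n : ℝ) - 1 / 24 = r ^ 2 / 24 by rw [hr2]; ring]
    field_simp
    norm_num
  have hα : (a * s) ^ 2 = π / 12 := by
    rw [mul_pow, ha2, hs2, hmu]
    field_simp
    norm_num
  have hβ' : ((a : ℂ) / s) ^ 2 = 2 * π * (n - 1 / 24) := by
    have := congrArg Complex.ofReal hβ
    push_cast at this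
    exact this
  have hα' : ((a : ℂ) * s) ^ 2 = π / 12 := by
    have := congrArg Complex.ofReal hα
    push_cast at this
    exact this
  rw [hβ', hα', show s ^ 2 / 2 = 1 / (2 * r) by rw [hs2]; field_simp,
    show √3 / 2 * s ^ 2 = √3 / (2 * r) by rw [hs2]; field_simp] at hI
  have hM : ∫ x in (-(√3 / (2 * r)))..(√3 / (2 * r)),
      Complex.exp (2 * π * (n - 1 / 24) * ((1 / (2 * r) : ℝ) - x * Complex.I)) *
      (Complex.sqrt ((1 / (2 * r) : ℝ) - x * Complex.I) *
        Complex.exp (π / (12 * ((1 / (2 * r) : ℝ) - x * Complex.I)))) = _ :=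
    Eq.trans (intervalIntegral.integral_congr fun x _ => by
      rw [Complex.exp_add, div_div]
      ring) hI
  rw [hM, ← Complex.ofReal_sub, Complex.norm_real, Real.norm_eq_abs] at hcirc
  have hJb := abs_integral_exp_neg_sq_sub_le ha0.le
  rw [← hJ, ha2] at hJb
  set M := s ^ 2 / a ^ 2 *
    (s * rexp (a ^ 2) + (a * s - s / (2 * a)) * rexp (2 * a ^ 2) * J) with hMdef
  have hK : s ^ 3 / a * √π = 2 * √3 / r ^ 2 := by
    rw [← pow_left_inj₀ (by positivity) (by positivity) two_ne_zero]
    have h3 : √3 ^ 2 = 3 := Real.sq_sqrt (by norm_num)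
    have hpi : √π ^ 2 = π := Real.sq_sqrt Real.pi_pos.le
    rw [mul_pow, div_pow, div_pow, mul_pow, h3, hpi, ha2, ← pow_mul, mul_comm 3 2, pow_mul, hs2,
      hmu]
    field_simp
    norm_num
  have hMeq : M = s ^ 3 / a ^ 2 * rexp (mu n / 2) +
      s ^ 3 / a * (1 - 1 / mu n) * rexp (mu n) * J := by
    have hmua : mu n = 2 * a ^ 2 := by linarith
    rw [hMdef, hmua, show 2 * a ^ 2 / 2 = a ^ 2 by ring]
    field_simp
  have hMT : M - T n = s ^ 3 / a ^ 2 * rexp (mu n / 2) +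
      s ^ 3 / a * (1 - 1 / mu n) * rexp (mu n) * (J - √π) := by
    rw [hMeq, hT, ← hK]
    ring
  have hmu1 : 1 < mu n := by
    rw [hmu]
    nlinarith [Real.pi_gt_three]
  have hfac : 1 / mu n < 1 := by
    rw [div_lt_one hmu0]
    exact hmu1
  have hfac0 : 0 < 1 / mu n := by positivity
  have hexp : rexp (mu n) * rexp (-(mu n / 2)) = rexp (mu n / 2) := by
    rw [← Real.exp_add]
    ring_nf
  have hsec : |s ^ 3 / a * (1 - 1 / mu n) * rexp (mu n) * (J - √π)| ≤
      2 * √3 / r ^ 2 * rexp (mu n / 2) := by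
    rw [abs_mul, abs_of_nonneg (mul_nonneg (mul_nonneg (by positivity) (by linarith))
      (Real.exp_nonneg _))]
    calc s ^ 3 / a * (1 - 1 / mu n) * rexp (mu n) * |J - √π|
        ≤ s ^ 3 / a * 1 * rexp (mu n) * (√π * rexp (-(mu n / 2))) := by
          gcongr
          linarith
      _ = s ^ 3 / a * √π * (rexp (mu n) * rexp (-(mu n / 2))) := by ring
      _ = _ := by rw [hK, hexp]
  have hs1 : s ≤ 1 := by
    rw [hs, Real.sqrt_le_left zero_le_one, one_pow, div_le_one hr0]
    linarith
  have hfirst : s ^ 3 / a ^ 2 ≤ 4 / r ^ 2 := by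
    rw [pow_succ, hs2, ha2, hmu, div_le_div_iff₀ (by positivity) (by positivity)]
    have e : 1 / r * s * r ^ 2 = s * r := by field_simp
    rw [e]
    have h₁ : s * r ≤ 1 * r := by gcongr
    have h₂ : 3 * r ≤ π * r := by
      gcongr
      exact Real.pi_gt_three.le
    linarith
  have h3 : 2 * √3 ≤ 4 := by
    have : √3 ≤ 2 := by
      rw [Real.sqrt_le_left (by norm_num)]
      norm_num
    linarith
  have hsmall : 4 / r ^ 2 ≤ 0.025 := by
    rw [div_le_iff₀ (by positivity)]
    nlinarith
  have hsec' : 2 * √3 / r ^ 2 ≤ 0.025 := by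
    refine le_trans ?_ hsmall
    gcongr
  have hMT' : |M - T n| ≤ 0.05 * rexp (mu n / 2) := by
    rw [hMT]
    refine (abs_add_le _ _).trans ?_
    rw [abs_of_nonneg (by positivity)]
    have := Real.exp_pos (mu n / 2)
    nlinarith
  calc |p n - T n| = |(p n - M) + (M - T n)| := by ring_nf
    _ ≤ |p n - M| + |M - T n| := abs_add_le _ _
    _ ≤ 1.1 * rexp (mu n / 2) := by linarith

lemma sq_le_exp_of_le {m : ℝ} (hm : 51 ≤ m) : 1.3 * m ^ 2 ≤ rexp (m / 6) := by
  have h1 : (2.7182 : ℝ) ^ 8 ≤ rexp 8 := by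
    rw [show (8 : ℝ) = (8 : ℕ) * 1 by norm_num, Real.exp_nat_mul]
    gcongr
    linarith [Real.exp_one_gt_d9]
  have h2 : (1.625 : ℝ) ≤ rexp 0.5 := by
    have := Real.quadratic_le_exp_of_nonneg (x := 0.5) (by norm_num)
    norm_num at this ⊢
    exact this
  have h3 := Real.quadratic_le_exp_of_nonneg (x := (m - 51) / 6) (by linarith)
  have hm' : 0 ≤ m - 51 := by linarith
  rw [show m / 6 = 8 + 0.5 + (m - 51) / 6 by ring, Real.exp_add, Real.exp_add]
  calc 1.3 * m ^ 2 ≤ 2.7182 ^ 8 * 1.625 * (1 + (m - 51) / 6 + ((m - 51) / 6) ^ 2 / 2) := by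
        norm_num
        nlinarith
    _ ≤ _ := by gcongr

/-- The relative error of the approximation `T` for large arguments. -/
lemma abs_p_sub_T_le_mul_of_large (n : ℕ) (hn : 400 ≤ n) :
    |p n - T n| ≤ T n * rexp (-(mu n / 3)) := by
  have hn' : (400 : ℝ) ≤ n := by exact_mod_cast hn
  refine (abs_p_sub_T_le n hn).trans ?_
  have hmu51 : 51 ≤ mu n := by
    have h98 : 97.9 ≤ √(24 * (n : ℝ) - 1) := by
      rw [Real.le_sqrt (by norm_num) (by linarith)]
      nlinarith
    rw [mu]
    nlinarith [Real.pi_gt_d2]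
  have hq := sq_le_exp_of_le hmu51
  have hdlow : 0.945 ≤ d := by
    have h3 : √3 ≤ 1.7321 := by
      rw [Real.sqrt_le_left (by norm_num)]
      norm_num
    rw [d, le_div_iff₀ (by positivity)]
    nlinarith [Real.pi_gt_d2]
  have hone : 0.98 ≤ 1 - 1 / mu n := by
    have : 1 / mu n ≤ 1 / 51 := one_div_le_one_div_of_le (by norm_num) hmu51
    norm_num at this ⊢
    linarith
  have hmu0 : 0 < mu n := by linarith
  have hexp : rexp (mu n) * rexp (-(mu n / 3)) = rexp (mu n / 6) * rexp (mu n / 2) := by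
    rw [← Real.exp_add, ← Real.exp_add]
    ring_nf
  calc 1.1 * rexp (mu n / 2) ≤ 0.945 / mu n ^ 2 * 0.98 * (1.3 * mu n ^ 2 * rexp (mu n / 2)) := by
        have e : 0.945 / mu n ^ 2 * 0.98 * (1.3 * mu n ^ 2 * rexp (mu n / 2)) =
          0.945 * 0.98 * 1.3 * rexp (mu n / 2) := by field_simp
        rw [e]
        gcongr
        norm_num
    _ ≤ d / mu n ^ 2 * (1 - 1 / mu n) * (rexp (mu n / 6) * rexp (mu n / 2)) := by
        gcongr
    _ = T n * rexp (-(mu n / 3)) := by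
        rw [← hexp, T]
        ring

/-- The `j`-th iterate of `t ↦ (o + z * t) % m`, started at `o`. -/
def geomIter (o z m : ℕ) : ℕ → ℕ
  | 0 => o
  | j + 1 => (o + z * geomIter o z m j) % m

/-- The numbers `partsLE k i`, for `i < N`, packed as base `Z` digits of a natural number. -/
def packedRow (Z N : ℕ) : ℕ → ℕ
  | 0 => 1
  | k + 1 => geomIter (packedRow Z N k) (Z ^ (k + 1)) (Z ^ N) (N / (k + 1))

lemma modEq_geomIter {o z m S : ℕ} (h : S ≡ o + z * S [MOD m]) (j : ℕ) :
    S ≡ geomIter o z m j + z ^ (j + 1) * S [MOD m] := by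
  induction j with
  | zero => simpa [geomIter] using h
  | succ j ih =>
    have h1 : geomIter o z m (j + 1) ≡ o + z * geomIter o z m j [MOD m] := Nat.mod_modEq _ _
    calc S ≡ o + z * S [MOD m] := h
      _ ≡ o + z * (geomIter o z m j + z ^ (j + 1) * S) [MOD m] := (ih.mul_left z).add_left o
      _ = o + z * geomIter o z m j + z ^ (j + 1 + 1) * S := by ring
      _ ≡ geomIter o z m (j + 1) + z ^ (j + 1 + 1) * S [MOD m] := h1.symm.add_right _

lemma packedRow_modEq (Z : ℕ) {N : ℕ} (hN : 0 < N) (k : ℕ) :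
    packedRow Z N k ≡ ∑ i ∈ Finset.range N, partsLE k i * Z ^ i [MOD Z ^ N] := by
  induction k with
  | zero =>
    simp only [packedRow, partsLE_zero]
    rw [Finset.sum_eq_single 0]
    · simp [Nat.ModEq]
    · intro i _ hi
      simp [hi]
    · simp [hN.ne']
  | succ k ih =>
    set S := ∑ i ∈ Finset.range N, partsLE (k + 1) i * Z ^ i with hS
    have hrec : S ≡ packedRow Z N k + Z ^ (k + 1) * S [MOD Z ^ N] := by
      have h := sum_range_partsLE_succ (R := ℕ) Z k N
      simp only [Nat.cast_id] at h
      have h2 : Z ^ (k + 1) * ∑ i ∈ Finset.range (N - (k + 1)), partsLE (k + 1) i * Z ^ i ≡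
          Z ^ (k + 1) * S [MOD Z ^ N] := by
        rw [hS, ← Finset.sum_range_add_sum_Ico _ (Nat.sub_le N (k + 1)), mul_add]
        refine Nat.ModEq.symm ?_
        have h3 : Z ^ (k + 1) * ∑ i ∈ Finset.Ico (N - (k + 1)) N, partsLE (k + 1) i * Z ^ i ≡ 0
            [MOD Z ^ N] := by
          rw [Nat.modEq_zero_iff_dvd, Finset.mul_sum]
          refine Finset.dvd_sum fun i hi => ?_
          rw [Finset.mem_Ico] at hi
          rw [mul_left_comm, ← pow_add]
          exact Dvd.dvd.mul_left (pow_dvd_pow _ (by omega)) _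
        simpa using h3.add_left (Z ^ (k + 1) *
          ∑ i ∈ Finset.range (N - (k + 1)), partsLE (k + 1) i * Z ^ i)
      rw [hS, h]
      exact (ih.symm.add h2).trans (by rw [hS, h])
    have hit := modEq_geomIter hrec (N / (k + 1))
    have hz : (Z ^ (k + 1)) ^ (N / (k + 1) + 1) * S ≡ 0 [MOD Z ^ N] := by
      rw [Nat.modEq_zero_iff_dvd, ← pow_mul]
      refine Dvd.dvd.mul_right (pow_dvd_pow _ ?_) _
      exact (Nat.lt_mul_div_succ N (Nat.succ_pos k)).le
    exact (hit.trans (hz.add_left _)).symm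

lemma sum_digits_lt {Z : ℕ} {c : ℕ → ℕ} {N : ℕ} (hc : ∀ i < N, c i < Z) :
    ∑ i ∈ Finset.range N, c i * Z ^ i < Z ^ N := by
  induction N with
  | zero => simp
  | succ N ih =>
    rw [Finset.sum_range_succ, pow_succ']
    have h1 := ih fun i hi => hc i (by omega)
    have h2 : (c N + 1) * Z ^ N ≤ Z * Z ^ N := Nat.mul_le_mul_right _ (hc N (by omega))
    linarith

lemma sum_digits_div_mod {Z : ℕ} {c : ℕ → ℕ} {N n : ℕ} (hc : ∀ i < N, c i < Z) (hn : n < N) :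
    (∑ i ∈ Finset.range N, c i * Z ^ i) / Z ^ n % Z = c n := by
  have hlow : ∑ i ∈ Finset.range n, c i * Z ^ i < Z ^ n :=
    sum_digits_lt fun i hi => hc i (by omega)
  have hZ : 0 < Z := by
    have := hc n hn
    omega
  obtain ⟨m, hm⟩ : Z ^ (n + 1) ∣ ∑ i ∈ Finset.Ico (n + 1) N, c i * Z ^ i := by
    refine Finset.dvd_sum fun i hi => ?_
    rw [Finset.mem_Ico] at hi
    exact Dvd.dvd.mul_left (pow_dvd_pow _ hi.1) _
  rw [← Finset.sum_range_add_sum_Ico _ (show n + 1 ≤ N by omega), Finset.sum_range_succ, hm,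
    show ∑ i ∈ Finset.range n, c i * Z ^ i + c n * Z ^ n + Z ^ (n + 1) * m =
      ∑ i ∈ Finset.range n, c i * Z ^ i + Z ^ n * (c n + Z * m) by ring,
    Nat.add_mul_div_left _ _ (by positivity), Nat.div_eq_of_lt hlow, zero_add,
    Nat.add_mul_mod_self_left, Nat.mod_eq_of_lt (hc n hn)]

lemma card_partition_le (n : ℕ) : Fintype.card n.Partition ≤ 2 ^ (n - 1) := by
  rw [← composition_card]
  exact Fintype.card_le_of_surjective _ Nat.Partition.ofComposition_surj

lemma card_partition_lt {n N : ℕ} (h : n < N) : Fintype.card n.Partition < 2 ^ N :=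
  (card_partition_le n).trans_lt (Nat.pow_lt_pow_right (by norm_num) (by omega))

lemma packedRow_div_mod {n N : ℕ} (h : n < N) :
    packedRow (2 ^ N) N N % (2 ^ N) ^ N / (2 ^ N) ^ n % 2 ^ N = Fintype.card n.Partition := by
  have hc : ∀ i < N, partsLE N i < 2 ^ N := fun i hi => by
    rw [partsLE_of_le hi.le]
    exact card_partition_lt hi
  have hmod := packedRow_modEq (2 ^ N) (show 0 < N by omega) N
  rw [hmod, Nat.mod_eq_of_lt (sum_digits_lt hc), sum_digits_div_mod hc h, partsLE_of_le h.le]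

/-- Newton's iteration for the square root of `m`. -/
def newtonSqrt (m : ℕ) : ℕ → ℕ → ℕ
  | 0, r => r
  | j + 1, r => newtonSqrt m j ((r + m / r) / 2)

/-- The numerator of the Taylor polynomial of degree `k` of `exp` at `a / D`, over `D ^ k * k!`. -/
def expNumer (D a : ℕ) : ℕ → ℕ
  | 0 => 1
  | k + 1 => (k + 1) * D * expNumer D a k + a ^ (k + 1)

lemma sum_pow_div_factorial_eq {D : ℕ} (hD : 0 < D) (a k : ℕ) :
    ∑ i ∈ Finset.range (k + 1), ((a : ℝ) / D) ^ i / i.factorial =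
      expNumer D a k / (D ^ k * k.factorial) := by
  induction k with
  | zero => simp [expNumer]
  | succ k ih =>
    have hD' : (D : ℝ) ≠ 0 := by positivity
    have hk : (k.factorial : ℝ) ≠ 0 := by positivity
    rw [Finset.sum_range_succ, ih, expNumer, Nat.factorial_succ]
    push_cast
    rw [div_pow]
    field_simp
    ring

lemma div_le_exp_of_div_le {D a : ℕ} {x : ℝ} (hD : 0 < D) (ha : (a : ℝ) / D ≤ x) (k : ℕ) :
    ((D * expNumer D a k / (D ^ k * k.factorial) : ℕ) : ℝ) / D ≤ rexp x := by
  have hD' : (0 : ℝ) < D := by positivity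
  rw [div_le_iff₀ hD']
  refine Nat.cast_div_le.trans ?_
  have h := Real.sum_le_exp_of_nonneg (show 0 ≤ (a : ℝ) / D by positivity) (k + 1)
  rw [sum_pow_div_factorial_eq hD] at h
  push_cast
  rw [mul_div_assoc, mul_comm]
  gcongr
  exact h.trans (Real.exp_le_exp.mpr ha)

lemma exp_le_div_of_le_div {D b : ℕ} {x : ℝ} (hD : 0 < D) (hb : x ≤ (b : ℝ) / D) (hbD : b ≤ D)
    (k : ℕ) :
    rexp x ≤ ((D * (expNumer D b k * ((k + 1) * D) + 2 * b ^ (k + 1)) /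
      (D ^ (k + 1) * (k + 1).factorial) + 1 : ℕ) : ℝ) / D := by
  have hD' : (0 : ℝ) < D := by positivity
  have hk : (0 : ℝ) < k.factorial := by positivity
  have hbD' : (b : ℝ) / D ≤ 1 := by
    rw [div_le_one hD']
    exact_mod_cast hbD
  refine (Real.exp_le_exp.mpr hb).trans ?_
  refine (Real.exp_bound' (by positivity) hbD' (Nat.succ_pos k)).trans ?_
  rw [Nat.succ_eq_add_one, sum_pow_div_factorial_eq hD, le_div_iff₀ hD']
  refine le_trans ?_ ((Nat.lt_floor_add_one
    (((D * (expNumer D b k * ((k + 1) * D) + 2 * b ^ (k + 1)) : ℕ) : ℝ) /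
      ((D ^ (k + 1) * (k + 1).factorial : ℕ) : ℝ))).le.trans_eq ?_)
  · have h2 : ((b : ℝ) / D) ^ (k + 1) * (((k + 1 : ℕ) : ℝ) + 1) /
        ((k + 1).factorial * ((k + 1 : ℕ) : ℝ)) ≤
        ((b : ℝ) / D) ^ (k + 1) * 2 / (k + 1).factorial := by
      rw [mul_div_mul_comm, mul_div_right_comm]
      gcongr
      rw [div_le_iff₀ (by positivity)]
      push_cast
      linarith
    calc _ ≤ ((expNumer D b k : ℝ) / (D ^ k * k.factorial) +
          ((b : ℝ) / D) ^ (k + 1) * 2 / (k + 1).factorial) * D := by gcongr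
      _ = _ := by
        rw [Nat.factorial_succ]
        push_cast
        rw [div_pow]
        field_simp
        ring
  · rw [Nat.floor_div_eq_div, Nat.cast_add_one]

/-- A comparison in integers which certifies the bound `abs_sub_le_of_checkBounds`. -/
def checkBounds (D a b L H c s : ℕ) : Bool :=
  Nat.ble D (96 * a) &&
  Nat.ble (c * s * (96 * a) * (D ^ 32) ^ 3 * 10 ^ 19)
    (34641016151377545870 * (96 * a - D) * ((L ^ 32) ^ 2 * (L ^ 32 + D ^ 32))) &&
  Nat.ble (34641016151377545871 * (96 * b - D) * ((H ^ 32) ^ 2 * (H ^ 32 - D ^ 32)))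
    (c * s * (96 * b) * (D ^ 32) ^ 3 * 10 ^ 19)

lemma abs_sub_le_of_checkBounds {D a b L H c s : ℕ} {x : ℝ} (hD : 0 < D) (hs : 0 < s)
    (ha : (a : ℝ) / D ≤ x) (hb : x ≤ (b : ℝ) / D) (hL : (L : ℝ) / D ≤ rexp x)
    (hH : rexp x ≤ (H : ℝ) / D) (h : checkBounds D a b L H c s = true) :
    |(c : ℝ) - 2 * √3 / s * (1 - 1 / (96 * x)) * rexp (96 * x)| ≤
      2 * √3 / s * (1 - 1 / (96 * x)) * rexp (96 * x) * rexp (-(32 * x)) := by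
  simp only [checkBounds, Bool.and_eq_true, Nat.ble_eq] at h
  obtain ⟨⟨hDa, hlo⟩, hhi⟩ := h
  have hD' : (0 : ℝ) < D := by positivity
  have hs' : (0 : ℝ) < s := by positivity
  have ha0 : (0 : ℝ) < a := by
    have : 0 < a := by omega
    positivity
  have hx0 : 0 < x := lt_of_lt_of_le (by positivity) ha
  have hab : (a : ℝ) ≤ b := by
    have := ha.trans hb
    rwa [div_le_div_iff_of_pos_right hD'] at this
  have hb0 : (0 : ℝ) < b := ha0.trans_le hab
  have hDa' : (D : ℝ) ≤ 96 * a := by exact_mod_cast hDa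
  have hDb : D ≤ 96 * b := hDa.trans (Nat.mul_le_mul_left _ (by exact_mod_cast hab))
  have hDH : D ≤ H := by
    have h1 : 1 ≤ (H : ℝ) / D := (Real.one_le_exp hx0.le).trans hH
    rw [one_le_div hD'] at h1
    exact_mod_cast h1
  have hDH' : D ^ 32 ≤ H ^ 32 := Nat.pow_le_pow_left hDH 32
  set X := rexp (32 * x) with hX
  have hXpow : X = rexp x ^ 32 := by
    rw [hX, ← Real.exp_nat_mul]
    norm_num
  have hX1 : 1 ≤ X := Real.one_le_exp (by linarith)
  have h96 : rexp (96 * x) = X ^ 3 := by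
    rw [hX, ← Real.exp_nat_mul]
    ring_nf
  have hinv : rexp (-(32 * x)) = X⁻¹ := Real.exp_neg _
  set q : ℝ := (D : ℝ) ^ 32 with hq
  have hq0 : 0 < q := by positivity
  have hXL : (L : ℝ) ^ 32 / q ≤ X := by
    rw [hXpow, hq, ← div_pow]
    gcongr
  have hXH : X ≤ (H : ℝ) ^ 32 / q := by
    rw [hXpow, hq, ← div_pow]
    gcongr
  have h3lo : 34641016151377545870 / 10 ^ 19 ≤ 2 * √3 := by
    have : 34641016151377545870 / 10 ^ 19 / 2 ≤ √3 := by
      rw [Real.le_sqrt (by norm_num) (by norm_num)]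
      norm_num
    linarith
  have h3hi : 2 * √3 ≤ 34641016151377545871 / 10 ^ 19 := by
    have : √3 ≤ 34641016151377545871 / 10 ^ 19 / 2 := by
      rw [Real.sqrt_le_left (by norm_num)]
      norm_num
    linarith
  have hflo : (96 * a - D) / (96 * a) ≤ 1 - 1 / (96 * x) := by
    have : 1 / (96 * x) ≤ 1 / (96 * (a / D)) := by gcongr
    refine le_trans (le_of_eq ?_) (sub_le_sub_left this 1)
    field_simp
  have hfhi : 1 - 1 / (96 * x) ≤ (96 * b - D) / (96 * b) := by
    have : 1 / (96 * (b / D)) ≤ 1 / (96 * x) := by gcongr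
    refine (sub_le_sub_left this 1).trans (le_of_eq ?_)
    field_simp
  have hf0 : 0 ≤ ((96 * a - D) / (96 * a) : ℝ) := div_nonneg (by linarith) (by positivity)
  have hf : 0 ≤ 1 - 1 / (96 * x) := hf0.trans hflo
  have hlo' : (c : ℝ) * s * (96 * a) * q ^ 3 * 10 ^ 19 ≤
      34641016151377545870 * (96 * a - D) * ((L ^ 32) ^ 2 * (L ^ 32 + q)) := by
    have := Nat.cast_le (α := ℝ).mpr hlo
    rw [Nat.cast_mul (34641016151377545870 * (96 * a - D)), Nat.cast_mul 34641016151377545870,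
      Nat.cast_sub hDa] at this
    push_cast at this
    rw [hq]
    linarith only [this]
  have hhi' : 34641016151377545871 * (96 * b - D) * (((H : ℝ) ^ 32) ^ 2 * (H ^ 32 - q)) ≤
      (c : ℝ) * s * (96 * b) * q ^ 3 * 10 ^ 19 := by
    have := Nat.cast_le (α := ℝ).mpr hhi
    rw [Nat.cast_mul (34641016151377545871 * (96 * b - D)), Nat.cast_mul 34641016151377545871,
      Nat.cast_mul ((H ^ 32) ^ 2), Nat.cast_sub hDb, Nat.cast_sub hDH'] at this
    push_cast at this
    rw [hq]
    linarith only [this]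
  have hup : c ≤ 2 * √3 / s * (1 - 1 / (96 * x)) * (X ^ 2 * (X + 1)) := by
    calc (c : ℝ) ≤ 34641016151377545870 / 10 ^ 19 / s * ((96 * a - D) / (96 * a)) *
          ((L ^ 32 / q) ^ 2 * (L ^ 32 / q + 1)) := by
          rw [show 34641016151377545870 / 10 ^ 19 / (s : ℝ) * ((96 * a - D) / (96 * a)) *
            ((L ^ 32 / q) ^ 2 * (L ^ 32 / q + 1)) =
            34641016151377545870 * (96 * a - D) * ((L ^ 32) ^ 2 * (L ^ 32 + q)) /
            (s * (96 * a) * q ^ 3 * 10 ^ 19) by field_simp, le_div_iff₀ (by positivity)]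
          linarith
      _ ≤ _ := by gcongr
  have hdown : 2 * √3 / s * (1 - 1 / (96 * x)) * (X ^ 2 * (X - 1)) ≤ c := by
    have hX0 : 0 ≤ X - 1 := by linarith
    calc 2 * √3 / s * (1 - 1 / (96 * x)) * (X ^ 2 * (X - 1))
        ≤ 34641016151377545871 / 10 ^ 19 / s * ((96 * b - D) / (96 * b)) *
          ((H ^ 32 / q) ^ 2 * (H ^ 32 / q - 1)) := by
          have := hf.trans hfhi
          gcongr
      _ ≤ (c : ℝ) := by
          rw [show 34641016151377545871 / 10 ^ 19 / (s : ℝ) * ((96 * b - D) / (96 * b)) *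
            ((H ^ 32 / q) ^ 2 * (H ^ 32 / q - 1)) =
            34641016151377545871 * (96 * b - D) * ((H ^ 32) ^ 2 * (H ^ 32 - q)) /
            (s * (96 * b) * q ^ 3 * 10 ^ 19) by field_simp, div_le_iff₀ (by positivity)]
          linarith
  have hXne : X ≠ 0 := by positivity
  rw [h96, hinv, abs_le]
  have e : 2 * √3 / s * (1 - 1 / (96 * x)) * X ^ 3 * X⁻¹ =
      2 * √3 / s * (1 - 1 / (96 * x)) * X ^ 2 := by
    rw [mul_assoc]
    congr 1
    field_simp
  rw [e]
  constructor
  · nlinarith only [hdown]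
  · nlinarith only [hup]

/-- A numerical certificate for the bound `abs_sub_le_of_checkExp`. -/
def checkExp (D a b c s : ℕ) : Bool :=
  Nat.ble b D &&
  checkBounds D a b (D * expNumer D a 11 / (D ^ 11 * 39916800))
    (D * (expNumer D b 11 * (12 * D) + 2 * b ^ 12) / (D ^ 12 * 479001600) + 1) c s

lemma abs_sub_le_of_checkExp {D a b c s : ℕ} {x : ℝ} (hD : 0 < D) (hs : 0 < s)
    (ha : (a : ℝ) / D ≤ x) (hb : x ≤ (b : ℝ) / D) (h : checkExp D a b c s = true) :
    |(c : ℝ) - 2 * √3 / s * (1 - 1 / (96 * x)) * rexp (96 * x)| ≤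
      2 * √3 / s * (1 - 1 / (96 * x)) * rexp (96 * x) * rexp (-(32 * x)) := by
  rw [checkExp, Bool.and_eq_true, Nat.ble_eq] at h
  exact abs_sub_le_of_checkBounds hD hs ha hb (div_le_exp_of_div_le hD ha 11)
    (exp_le_div_of_le_div hD hb h.1 11) h.2

/-- A numerical certificate for the bound `abs_sub_T_le_of_checkSqrt`. -/
def checkSqrt (D r c s : ℕ) : Bool :=
  Nat.ble (r * r) (s * D ^ 2) && Nat.ble (s * D ^ 2) ((r + 1) * (r + 1)) &&
  checkExp D (314159265358979323846 * r / (576 * 10 ^ 20))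
    (314159265358979323847 * (r + 1) / (576 * 10 ^ 20) + 1) c s

lemma abs_sub_T_le_of_checkSqrt {D r c n : ℕ} (hD : 0 < D) (hn : 0 < n)
    (h : checkSqrt D r c (24 * n - 1) = true) :
    |(c : ℝ) - T n| ≤ T n * rexp (-(mu n / 3)) := by
  simp only [checkSqrt, Bool.and_eq_true, Nat.ble_eq] at h
  obtain ⟨⟨hlo, hhi⟩, h⟩ := h
  have hn1 : (1 : ℝ) ≤ n := by exact_mod_cast hn
  have hs : ((24 * n - 1 : ℕ) : ℝ) = 24 * n - 1 := by
    rw [Nat.cast_sub (by omega)]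
    push_cast
    ring
  have hD' : (0 : ℝ) < D := by positivity
  set t := √(24 * (n : ℝ) - 1) with ht
  have ht2 : t ^ 2 = 24 * n - 1 := Real.sq_sqrt (by linarith)
  have ht0 : 0 ≤ t := Real.sqrt_nonneg _
  have hrlo : (r : ℝ) ≤ t * D := by
    refine le_of_sq_le_sq ?_ (by positivity)
    rw [mul_pow, ht2, ← hs, sq]
    exact_mod_cast hlo
  have hrhi : t * D ≤ r + 1 := by
    refine le_of_sq_le_sq ?_ (by positivity)
    rw [mul_pow, ht2, ← hs, sq ((r : ℝ) + 1)]
    exact_mod_cast hhi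
  have hx : mu n = 96 * (π * t / 576) := by
    rw [mu, ← ht]
    ring
  have ha : ((314159265358979323846 * r / (576 * 10 ^ 20) : ℕ) : ℝ) / D ≤ π * t / 576 := by
    rw [div_le_iff₀ hD']
    refine Nat.cast_div_le.trans ?_
    push_cast
    have h1 : 3.14159265358979323846 * (r : ℝ) ≤ π * (t * D) := by
      gcongr
      exact Real.pi_gt_d20.le
    linarith
  have hb : π * t / 576 ≤
      ((314159265358979323847 * (r + 1) / (576 * 10 ^ 20) + 1 : ℕ) : ℝ) / D := by
    rw [le_div_iff₀ hD']
    have h1 : π * (t * D) ≤ 3.14159265358979323847 * ((r : ℝ) + 1) := by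
      gcongr
      exact Real.pi_lt_d20.le
    have h2 := (Nat.lt_floor_add_one (((314159265358979323847 * (r + 1) : ℕ) : ℝ) /
      ((576 * 10 ^ 20 : ℕ) : ℝ))).le
    rw [Nat.floor_div_eq_div, ← Nat.cast_add_one] at h2
    refine le_trans ?_ h2
    push_cast
    linarith
  have := abs_sub_le_of_checkExp hD (by omega) ha hb h
  rw [← hx, hs, ← T_eq hn1] at this
  convert this using 3
  rw [hx]
  ring

/-- Runs `checkSqrt` for all `n` with `39 ≤ n < N`, reading the partition numbers off the base `Z`
digits of `V`. -/
def checkBelow (V Z : ℕ) : ℕ → Bool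
  | 0 => true
  | n + 1 => (Nat.ble n 38 || checkSqrt (10 ^ 12)
      (newtonSqrt ((24 * n - 1) * 10 ^ 24) 10 (100 * 10 ^ 12)) (V / Z ^ n % Z) (24 * n - 1)) &&
      checkBelow V Z n

lemma abs_sub_T_le_of_checkBelow {V Z N n : ℕ} (h : checkBelow V Z N = true) (hn : 39 ≤ n)
    (hnN : n < N) :
    |((V / Z ^ n % Z : ℕ) : ℝ) - T n| ≤ T n * rexp (-(mu n / 3)) := by
  induction N with
  | zero => omega
  | succ N ih =>
    rw [checkBelow, Bool.and_eq_true, Bool.or_eq_true, Nat.ble_eq] at h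
    rcases (Nat.lt_succ_iff_lt_or_eq.mp hnN) with h' | rfl
    · exact ih h.2 h'
    · exact abs_sub_T_le_of_checkSqrt (by norm_num) (by omega) (h.1.resolve_left (by omega))

lemma checkBelow_packedRow :
    checkBelow (packedRow (2 ^ 400) 400 400 % (2 ^ 400) ^ 400) (2 ^ 400) 400 = true := by
  decide +kernel

/-- The relative error of the approximation `T`. -/
lemma abs_p_sub_T_le_mul (n : ℕ) (hn : 39 ≤ n) : |p n - T n| ≤ T n * rexp (-(mu n / 3)) := by
  rcases lt_or_ge n 400 with h | h
  · have := abs_sub_T_le_of_checkBelow checkBelow_packedRow hn h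
    rwa [packedRow_div_mod h] at this
  · exact abs_p_sub_T_le_mul_of_large n h

lemma abs_log_le_of_abs_sub_one_le {u ε : ℝ} (hε : ε ≤ 1 / 6) (h : |u - 1| ≤ ε) :
    |Real.log u| ≤ 1.2 * ε := by
  obtain ⟨h1, h2⟩ := abs_le.mp h
  have hu : 0 < u := by linarith
  have hε0 : 0 ≤ ε := (abs_nonneg _).trans h
  rw [abs_le]
  constructor
  · refine le_trans ?_ (Real.one_sub_inv_le_log_of_pos hu)
    have : u⁻¹ ≤ 1 + 1.2 * ε := by
      rw [inv_le_iff_one_le_mul₀ hu]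
      nlinarith
    linarith
  · linarith [Real.log_le_sub_one_of_pos hu]

lemma fifteen_le_mu {m : ℕ} (hm : 39 ≤ m) : 15 ≤ mu m := by
  have hm' : (39 : ℝ) ≤ m := by exact_mod_cast hm
  have : 30 ≤ √(24 * (m : ℝ) - 1) := by
    rw [Real.le_sqrt (by norm_num) (by linarith)]
    linarith
  rw [mu]
  nlinarith [Real.pi_gt_three]

lemma T_pos {x : ℝ} (hx : 15 ≤ mu x) : 0 < T x := by
  have h1 : 1 / mu x < 1 := by
    rw [div_lt_one (by linarith)]
    linarith
  have hd : 0 < d := by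
    rw [d]
    positivity
  have h2 : 0 < 1 - 1 / mu x := by linarith
  rw [T]
  positivity

lemma abs_E_le {k m : ℕ} (hk : 39 ≤ k) (hm : k ≤ m) :
    |E m| ≤ 1.2 * (1 / (k : ℝ) * rexp (-(mu k / 3))) := by
  have hmu := fifteen_le_mu (hk.trans hm)
  have hT := T_pos hmu
  have hε : rexp (-(mu m / 3)) ≤ 1 / 6 := by
    rw [Real.exp_neg, inv_eq_one_div]
    refine one_div_le_one_div_of_le (by norm_num) ?_
    linarith [Real.add_one_le_exp (mu m / 3)]
  have hu : |p m / T m - 1| ≤ rexp (-(mu m / 3)) := by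
    rw [div_sub_one hT.ne', abs_div, abs_of_pos hT, div_le_iff₀' hT]
    exact abs_p_sub_T_le_mul m (hk.trans hm)
  have hkm : mu k ≤ mu m := by
    rw [mu, mu]
    gcongr
  have hk0 : (0 : ℝ) < k := by
    have : 0 < k := by omega
    positivity
  rw [E, abs_mul, abs_of_nonneg (by positivity)]
  calc 1 / (m : ℝ) * |Real.log (p m / T m)| ≤ 1 / (m : ℝ) * (1.2 * rexp (-(mu m / 3))) := by
        gcongr
        exact abs_log_le_of_abs_sub_one_le hε hu
    _ ≤ 1 / (k : ℝ) * (1.2 * rexp (-(mu k / 3))) := by gcongr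
    _ = _ := by ring

theorem second_difference_E_bound (n : ℕ) (hn : 40 ≤ n) :
    |E (n + 1) + E (n - 1) - 2 * E n| <
      5 / ((n : ℝ) - 1) * Real.exp (-(π * Real.sqrt (24 * (n : ℝ) - 25)) / 18) := by
  obtain ⟨k, rfl⟩ : ∃ k, n = k + 1 := ⟨n - 1, by omega⟩
  have hk : 39 ≤ k := by omega
  have h1 := abs_E_le hk (show k ≤ k + 1 + 1 by omega)
  have h2 := abs_E_le hk le_rfl
  have h3 := abs_E_le hk (show k ≤ k + 1 by omega)
  have hk0 : (0 : ℝ) < k := by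
    have : 0 < k := by omega
    positivity
  have hB : 0 < 1 / (k : ℝ) * rexp (-(mu k / 3)) := by positivity
  have e : 5 / (((k + 1 : ℕ) : ℝ) - 1) *
      rexp (-(π * √(24 * ((k + 1 : ℕ) : ℝ) - 25)) / 18) =
      5 * (1 / (k : ℝ) * rexp (-(mu k / 3))) := by
    rw [mu]
    push_cast
    rw [add_sub_cancel_right, show 24 * ((k : ℝ) + 1) - 25 = 24 * k - 1 by ring,
      show -(π / 6 * √(24 * (k : ℝ) - 1) / 3) = -(π * √(24 * (k : ℝ) - 1)) / 18 by ring]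
    ring
  rw [e, Nat.add_sub_cancel]
  obtain ⟨h1, h1'⟩ := abs_le.mp h1
  obtain ⟨h2, h2'⟩ := abs_le.mp h2
  obtain ⟨h3, h3'⟩ := abs_le.mp h3
  rw [abs_lt]
  constructor <;> linarith
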